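/- arXiv:1601.01629 — 2 statements merged into one kernel-verified Lean document; each statement's English description precedes it below -/
import Mathlib

section
/- Let n ≥ 1, j ≥ 1 and D ≥ 1 be integers and set C_n = 2^(n+1)·n! / (2^(1/n) − 1)^n. For each 1 ≤ i ≤ j let Γ_i be a finite family of real algebraic subsets of ℝ^n (each member being the common zero set of finitely many real polynomials), and let B_i ≥ 1 be a real number such that for every non-zero polynomial q ∈ ℝ[X₁,…,X_n] of total degree at most D, every γ ∈ Γ_i intersects at most B_i connected components of ℝ^n \ Z(q). Then there exists a non-zero polynomial p ∈ ℝ[X₁,…,X_n] of total degree at most D such that simultaneously for every 1 ≤ i ≤ j, every connected component of ℝ^n \ Z(p) intersects at most C_n · j · B_i · D^(−n) · |Γ_i| members of Γ_i. -/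
/-!
The partitioning polynomial is a product `p = ∏ b, p_b` of `k` factors. Letting the coefficient
vector of each `p_b` range over the boundary of a cube, one looks for a point of the product of
these boundaries at which every sign cell `{y | ∀ b, τ b * p_b y > 0}` meets equally many members
of each family, counted continuously. Flipping the sign of `p_b` permutes the sign cells, so by
Fourier analysis on `{1, -1} ^ k` this asks for a common zero of functions that transform under the
sign changes of blocks by the nontrivial characters `∏ b ∈ S, τ b`. There are `j * 2 ^ b` equations
whose set `S` has greatest element `b`; if the `b`-th cube boundary has this dimension, a common
zero exists by a Borsuk–Ulam theorem. A member of the `i`-th family meets at most `B i` of the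
`2 ^ k` sign cells, so each cell meets at most `B i * |Γ i| / 2 ^ k` members. Polynomials of degree
about `(n! * j * 2 ^ b) ^ (1 / n)` have enough coefficients, and these degrees sum to at most `D`
for `2 ^ k` of order `D ^ n / j`.

For the Borsuk–Ulam theorem, subdivide the product of cube boundaries into a grid and label the
cells equivariantly by signs. Modulo two, the number of flags of cells, counted up to symmetry,
along which the labels change in the prescribed order does not depend on the labelling: the cup
products of two labellings differ by the coboundary of an invariant cochain. The labelling by
leading signs has exactly one such flag. Hence the signs of the given functions change along some
flag, and refining the grid yields a common zero.
-/

namespace PolynomialPartitioning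

/-! ### Cochains modulo two -/

section Cochains

variable {R V G : Type*} [CommRing R] {N : ℕ}

/-- The simplicial coboundary of a cochain on ordered simplices, without signs: it is only used
over rings of characteristic two. -/
def coboundary (ψ : (Fin N → V) → R) (v : Fin (N + 1) → V) : R :=
  ∑ t : Fin (N + 1), ψ (t.removeNth v)

/-- The cup product of the edge cochains `(x, y) ↦ s i x + s i y`, each of which is the coboundary
of the vertex labelling `s i` in characteristic two. -/
def edgeCup (s : Fin N → V → R) (v : Fin (N + 1) → V) : R :=
  ∏ i, (s i (v i.castSucc) + s i (v i.succ))

theorem edgeCup_succ (s : Fin (N + 1) → V → R) (v : Fin (N + 2) → V) :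
    edgeCup s v = (s 0 (v 0) + s 0 (v 1)) * edgeCup (Fin.tail s) (Fin.tail v) := by
  rw [edgeCup, Fin.prod_univ_succ]
  rfl

theorem coboundary_add (ψ χ : (Fin N → V) → R) (v : Fin (N + 1) → V) :
    coboundary (fun w => ψ w + χ w) v = coboundary ψ v + coboundary χ v :=
  Finset.sum_add_distrib

variable [CharP R 2]

theorem coboundary_edge_mul (s : V → R) (ψ : (Fin (N + 1) → V) → R) (v : Fin (N + 3) → V) :
    coboundary (fun w => (s (w 0) + s (w 1)) * ψ (Fin.tail w)) v =
      (s (v 0) + s (v 1)) * coboundary ψ (Fin.tail v) := by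
  have face_succ_succ (t : Fin (N + 1)) :
      (s (t.succ.succ.removeNth v 0) + s (t.succ.succ.removeNth v 1)) *
          ψ (Fin.tail (t.succ.succ.removeNth v)) =
        (s (v 0) + s (v 1)) * ψ (t.succ.removeNth (Fin.tail v)) := by
    congr 2
    funext i
    simp only [Fin.tail, Fin.removeNth, Fin.succ_succAbove_succ]
  have face_zero :
      (s (Fin.removeNth 0 v 0) + s (Fin.removeNth 0 v 1)) * ψ (Fin.tail (Fin.removeNth 0 v)) =
        (s (v 1) + s (v 2)) * ψ (Fin.removeNth 0 (Fin.tail v)) := rfl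
  have face_one :
      (s (Fin.removeNth 1 v 0) + s (Fin.removeNth 1 v 1)) * ψ (Fin.tail (Fin.removeNth 1 v)) =
        (s (v 0) + s (v 2)) * ψ (Fin.removeNth 0 (Fin.tail v)) := by
    congr 2
  rw [coboundary, coboundary, Fin.sum_univ_succ, Fin.sum_univ_succ,
    Fin.sum_univ_succ (n := N + 1), Fin.succ_zero_eq_one, face_zero, face_one,
    Finset.sum_congr rfl fun t _ => face_succ_succ t, ← Finset.mul_sum]
  linear_combination ψ (Fin.removeNth 0 (Fin.tail v)) * CharTwo.add_self_eq_zero (s (v 2))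

theorem coboundary_edgeCup (s : Fin N → V → R) (v : Fin (N + 2) → V) :
    coboundary (edgeCup s) v = 0 := by
  induction N with
  | zero => simp [coboundary, edgeCup, CharTwo.two_eq_zero]
  | succ N ih =>
    rw [funext (edgeCup_succ s), coboundary_edge_mul, ih, mul_zero]

theorem coboundary_vertex_mul_edgeCup (a : V → R) (s : Fin N → V → R) (v : Fin (N + 2) → V) :
    coboundary (fun w => a (w 0) * edgeCup s w) v =
      (a (v 0) + a (v 1)) * edgeCup s (Fin.tail v) := by
  have closed := coboundary_edgeCup s v
  rw [coboundary, Fin.sum_univ_succ] at closed ⊢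
  have face_succ (t : Fin (N + 1)) :
      a (t.succ.removeNth v 0) * edgeCup s (t.succ.removeNth v) =
        a (v 0) * edgeCup s (t.succ.removeNth v) := rfl
  rw [Finset.sum_congr rfl fun t _ => face_succ t, ← Finset.mul_sum,
    ← CharTwo.add_eq_zero.mp closed]
  change a (v 1) * edgeCup s (Fin.tail v) + a (v 0) * edgeCup s (Fin.tail v) = _
  ring

variable [Group G] [MulAction G V] {e : Fin N → G → R} {s s' : Fin N → V → R}

theorem edgeCup_smul (hs : ∀ i g v, s i (g • v) = s i v + e i g) (g : G) (v : Fin (N + 1) → V) :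
    edgeCup s (g • v) = edgeCup s v := by
  refine Finset.prod_congr rfl fun i _ => ?_
  rw [Pi.smul_apply, Pi.smul_apply, hs, hs]
  linear_combination CharTwo.add_self_eq_zero (e i g)

theorem exists_invariant_primitive_edgeCup_add {e : Fin (N + 1) → G → R}
    {s s' : Fin (N + 1) → V → R} (hs : ∀ i g v, s i (g • v) = s i v + e i g)
    (hs' : ∀ i g v, s' i (g • v) = s' i v + e i g) :
    ∃ ψ : (Fin (N + 1) → V) → R, (∀ (g : G) w, ψ (g • w) = ψ w) ∧
      ∀ v, edgeCup s v + edgeCup s' v = coboundary ψ v := by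
  have vertex_inv (g : G) (x : V) : s 0 (g • x) + s' 0 (g • x) = s 0 x + s' 0 x := by
    rw [hs, hs']
    linear_combination CharTwo.add_self_eq_zero (e 0 g)
  induction N with
  | zero =>
    refine ⟨fun w => s 0 (w 0) + s' 0 (w 0), fun g w => vertex_inv g (w 0), fun v => ?_⟩
    rw [edgeCup_succ, edgeCup_succ s', coboundary, Fin.sum_univ_succ, Fin.sum_univ_succ]
    simp only [edgeCup, Fin.removeNth, Finset.univ_eq_empty, Finset.prod_empty, Finset.sum_empty]
    change (s 0 (v 0) + s 0 (v 1)) * 1 + (s' 0 (v 0) + s' 0 (v 1)) * 1 =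
      s 0 (v 1) + s' 0 (v 1) + (s 0 (v 0) + s' 0 (v 0) + 0)
    ring
  | succ N ih =>
    obtain ⟨ψ, ψ_inv, ψ_primitive⟩ := ih (e := Fin.tail e) (s := Fin.tail s) (s' := Fin.tail s')
      (fun i => hs i.succ) (fun i => hs' i.succ) fun g x => by
        simp only [Fin.tail, hs, hs']
        linear_combination CharTwo.add_self_eq_zero (e (Fin.succ 0) g)
    refine ⟨fun w => (s 0 (w 0) + s 0 (w 1)) * ψ (Fin.tail w) +
      (s 0 (w 0) + s' 0 (w 0)) * edgeCup (Fin.tail s') w, fun g w => ?_, fun v => ?_⟩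
    · have edge_inv : s 0 (g • w 0) + s 0 (g • w 1) = s 0 (w 0) + s 0 (w 1) := by
        rw [hs, hs]
        linear_combination CharTwo.add_self_eq_zero (e 0 g)
      simp only [Pi.smul_apply, vertex_inv, edge_inv, ← ψ_inv g (Fin.tail w),
        edgeCup_smul (e := Fin.tail e) (s := Fin.tail s') (fun i => hs' i.succ)]
      rfl
    · rw [coboundary_add, coboundary_edge_mul, ← ψ_primitive,
        coboundary_vertex_mul_edgeCup (fun x => s 0 x + s' 0 x), edgeCup_succ, edgeCup_succ s']
      linear_combination (-(s 0 (v 0) + s 0 (v 1))) *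
        CharTwo.add_self_eq_zero (edgeCup (Fin.tail s') (Fin.tail v))

end Cochains

/-! ### Independence of the equivariant labelling -/

section FundamentalDomain

variable {R G V Y : Type*} [Group G] [MulAction G V] {F : V → Prop}

open Classical in
theorem sum_ite_smul_eq_one [Semiring R] [Fintype G] (hF : ∀ v, ∃! g : G, F (g • v)) (v : V) :
    ∑ g : G, (if F (g • v) then (1 : R) else 0) = 1 := by
  obtain ⟨g, hg, g_unique⟩ := hF v
  rw [Finset.sum_eq_single g (fun h _ hne => if_neg fun hh => hne (g_unique h hh)) (by simp),
    if_pos hg]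

open Classical in
theorem sum_fundamentalDomain_eq [CommSemiring R] [Finite G] [Fintype Y] [MulAction G Y]
    (hF : ∀ v, ∃! g : G, F (g • v)) {a b : Y → V} (ha : ∀ (g : G) y, a (g • y) = g • a y)
    (hb : ∀ (g : G) y, b (g • y) = g • b y) {K : Y → R} (hK : ∀ (g : G) y, K (g • y) = K y) :
    ∑ y with F (a y), K y = ∑ y with F (b y), K y := by
  have := Fintype.ofFinite G
  simp only [Finset.sum_filter]
  -- Insert `1 = ∑ g, [F (g • b y)]` and translate by `g⁻¹` to move the sum over `g` onto `a`.
  calc ∑ y, (if F (a y) then K y else 0)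
      = ∑ y, ∑ g : G, (if F (a y) then K y else 0) * (if F (g • b y) then 1 else 0) := by
        simp only [← Finset.mul_sum, sum_ite_smul_eq_one hF, mul_one]
    _ = ∑ g : G, ∑ y, (if F (a y) then K y else 0) * (if F (g • b y) then 1 else 0) :=
        Finset.sum_comm
    _ = ∑ g : G, ∑ y, (if F (g⁻¹ • a y) then 1 else 0) * (if F (b y) then K y else 0) := by
        refine Finset.sum_congr rfl fun g _ => ?_
        rw [← Equiv.sum_comp (MulAction.toPerm g⁻¹)]
        refine Finset.sum_congr rfl fun y _ => ?_
        simp only [MulAction.toPerm_apply, ha, hb, hK, smul_inv_smul]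
        split_ifs <;> simp
    _ = ∑ y, (∑ g : G, if F (g⁻¹ • a y) then 1 else 0) * (if F (b y) then K y else 0) := by
        rw [Finset.sum_comm]
        simp only [Finset.sum_mul]
    _ = ∑ y, (if F (b y) then K y else 0) := by
        refine Finset.sum_congr rfl fun y _ => ?_
        have := Equiv.sum_comp (Equiv.inv G) fun g => if F (g • a y) then (1 : R) else 0
        rw [sum_ite_smul_eq_one hF] at this
        exact (congrArg (· * _) this).trans (one_mul _)

variable [CommRing R] [CharP R 2] [Finite G] [Fintype V] {N : ℕ} {ch : (Fin (N + 2) → V) → Prop}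

open Classical in
theorem sum_face_eq_zero (hF : ∀ v, ∃! g : G, F (g • v)) (hch : ∀ (g : G) v, ch (g • v) ↔ ch v)
    {t : Fin (N + 2)} (thin : ∀ w : Fin (N + 1) → V, Even {x | ch (t.insertNth x w)}.ncard)
    {ψ : (Fin (N + 1) → V) → R} (hψ : ∀ (g : G) w, ψ (g • w) = ψ w) :
    ∑ v with F (v 0), (if ch v then ψ (t.removeNth v) else 0) = 0 := by
  rw [sum_fundamentalDomain_eq (G := G) hF (b := fun v => v (t.succAbove 0)) (fun _ _ => rfl)
    (fun _ _ => rfl) fun g v => by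
      simp only [hch]
      rw [← hψ g (t.removeNth v)]
      rfl]
  rw [Finset.sum_filter, ← Equiv.sum_comp (Fin.insertNthEquiv (fun _ => V) t),
    Fintype.sum_prod_type_right]
  refine Finset.sum_eq_zero fun w _ => ?_
  have even_cofaces : ((Finset.univ.filter fun x => ch (t.insertNth x w)).card : R) = 0 := by
    rw [← Set.ncard_coe_finset, Finset.coe_filter_univ]
    rw [CharTwo.natCast_eq_ite, if_pos (thin w)]
  calc ∑ x, _ = ∑ x, (if F (w 0) then ψ w else 0) * (if ch (t.insertNth x w) then 1 else 0) := by
        refine Finset.sum_congr rfl fun x _ => ?_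
        have insert_eq : Fin.insertNthEquiv (fun _ => V) t (x, w) = t.insertNth x w := rfl
        have remove_eq : t.removeNth (Fin.insertNthEquiv (fun _ => V) t (x, w)) = w :=
          congrArg Prod.snd ((Fin.insertNthEquiv (fun _ => V) t).symm_apply_apply (x, w))
        rw [remove_eq, insert_eq, Fin.insertNth_apply_succAbove]
        split_ifs <;> simp
    _ = 0 := by rw [← Finset.mul_sum, Finset.sum_boole, even_cofaces, mul_zero]

open Classical in
theorem sum_edgeCup_eq_of_equivariant (hF : ∀ v, ∃! g : G, F (g • v))
    (hch : ∀ (g : G) v, ch (g • v) ↔ ch v)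
    (thin : ∀ (t : Fin (N + 2)) (w : Fin (N + 1) → V), Even {x | ch (t.insertNth x w)}.ncard)
    {e : Fin (N + 1) → G → R} {s s' : Fin (N + 1) → V → R}
    (hs : ∀ i g v, s i (g • v) = s i v + e i g) (hs' : ∀ i g v, s' i (g • v) = s' i v + e i g) :
    ∑ v with F (v 0), (if ch v then edgeCup s v else 0) =
      ∑ v with F (v 0), (if ch v then edgeCup s' v else 0) := by
  obtain ⟨ψ, ψ_inv, ψ_primitive⟩ := exists_invariant_primitive_edgeCup_add hs hs'
  rw [← CharTwo.add_eq_zero, ← Finset.sum_add_distrib]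
  calc ∑ v with F (v 0), ((if ch v then edgeCup s v else 0) + if ch v then edgeCup s' v else 0)
      = ∑ v with F (v 0), ∑ t : Fin (N + 2), (if ch v then ψ (t.removeNth v) else 0) := by
        refine Finset.sum_congr rfl fun v _ => ?_
        split_ifs
        · exact ψ_primitive v
        · simp
    _ = 0 := by
        rw [Finset.sum_comm]
        exact Finset.sum_eq_zero fun t _ => sum_face_eq_zero hF hch (thin t) ψ_inv

end FundamentalDomain

/-! ### The cubical decomposition of a product of cube boundaries -/

section CubeBoundary

variable {k : ℕ} {m : Fin k → ℕ} {R : Type*} [AddCommGroup R] [LinearOrder R]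

/-- The coordinates of `∏ b, ℝ ^ (m b + 1)`, grouped into blocks. -/
abbrev BlockIndex (m : Fin k → ℕ) : Type := Σ b, Fin (m b + 1)

/-- The product over the blocks `b` of the boundaries of the cubes `[-r, r] ^ (m b + 1)`. It serves
both as the space of the Borsuk–Ulam theorem (over `ℝ`) and as its cell decomposition (over `ℤ`). -/
def cubeBoundary (m : Fin k → ℕ) (r : R) : Set (BlockIndex m → R) :=
  {x | (∀ c, |x c| ≤ r) ∧ ∀ b, ∃ i, |x ⟨b, i⟩| = r}

/-- Change the signs of whole blocks. -/
def blockSign (g : Fin k → ℤˣ) (x : BlockIndex m → R) : BlockIndex m → R :=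
  fun c => g c.1 • x c

theorem abs_units_smul [IsOrderedAddMonoid R] (u : ℤˣ) (x : R) : |u • x| = |x| := by
  rcases Int.units_eq_one_or u with rfl | rfl <;> simp

theorem blockSign_mem_cubeBoundary [IsOrderedAddMonoid R] (g : Fin k → ℤˣ)
    {x : BlockIndex m → R} {r : R} (hx : x ∈ cubeBoundary m r) :
    blockSign g x ∈ cubeBoundary m r := by
  simpa only [cubeBoundary, blockSign, Set.mem_ofPred_eq, abs_units_smul] using hx

end CubeBoundary

section CellComplex

variable {ι : Type*} {k : ℕ} {m : Fin k → ℕ} {M : ℤ}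

/-- `y` arises from `u` by moving the coordinate `c` by one. -/
def IsStep (u y : ι → ℤ) (c : ι) : Prop :=
  (y c = u c + 1 ∨ y c = u c - 1) ∧ ∀ d ≠ c, y d = u d

/-- Integer points encode the cells of the grid of side two: an odd coordinate `a` stands for the
interval `[a - 1, a + 1]` and an even one for a point. `IsFacet u x` says that `u` is a face of `x`
of codimension one. -/
def IsFacet (u x : ι → ℤ) : Prop :=
  ∃ c, 2 ∣ u c ∧ IsStep u x c

/-- The zero-dimensional cells of the grid. -/
def IsVertex (x : ι → ℤ) : Prop := ∀ c, 2 ∣ x c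

/-- The cells of full dimension of a product of cube boundaries. -/
def IsTop (x : BlockIndex m → ℤ) : Prop :=
  ∀ b i i', 2 ∣ x ⟨b, i⟩ → 2 ∣ x ⟨b, i'⟩ → i = i'

/-- The cells of the product of cube boundaries; they form a complex for even `M`. -/
abbrev Cell (m : Fin k → ℕ) (M : ℤ) : Type := cubeBoundary m M

instance : Finite (Cell m M) :=
  ((Set.Finite.pi' fun _ : BlockIndex m => Set.finite_Icc (-M) M).subset
    fun _ hx c => abs_le.mp (hx.1 c)).to_subtype

noncomputable instance : Fintype (Cell m M) := Fintype.ofFinite _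

instance : MulAction (Fin k → ℤˣ) (Cell m M) where
  smul g x := ⟨blockSign g x, blockSign_mem_cubeBoundary g x.2⟩
  one_smul x := Subtype.ext (funext fun c => one_smul ℤˣ (x.1 c))
  mul_smul g h x := Subtype.ext (funext fun c => mul_smul (g c.1) (h c.1) (x.1 c))

theorem coe_smul_cell (g : Fin k → ℤˣ) (x : Cell m M) : (g • x).1 = blockSign g x.1 := rfl

/-- Chains of cells going up one dimension at a time from a vertex to a top cell. -/
def IsFlag {N : ℕ} (v : Fin (N + 1) → Cell m M) : Prop :=
  IsVertex (v 0).1 ∧ (∀ i : Fin N, IsFacet (v i.castSucc).1 (v i.succ).1) ∧ IsTop (v (Fin.last N)).1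

theorem two_dvd_units_smul (u : ℤˣ) (x : ℤ) : 2 ∣ u • x ↔ 2 ∣ x := by
  rcases Int.units_eq_one_or u with rfl | rfl <;> simp

theorem isFacet_blockSign (g : Fin k → ℤˣ) {u x : BlockIndex m → ℤ} (h : IsFacet u x) :
    IsFacet (blockSign g u) (blockSign g x) := by
  obtain ⟨c, even, step, off⟩ := h
  refine ⟨c, (two_dvd_units_smul _ _).mpr even, ?_, fun d hd => by rw [blockSign, off d hd]; rfl⟩
  rcases Int.units_eq_one_or (g c.1) with hg | hg <;>
    simp only [blockSign, hg, one_smul, Units.neg_smul] <;> omega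

theorem isFlag_smul {N : ℕ} (g : Fin k → ℤˣ) (v : Fin (N + 1) → Cell m M) :
    IsFlag (g • v) ↔ IsFlag v := by
  have smul_flag (g : Fin k → ℤˣ) (v : Fin (N + 1) → Cell m M) (hv : IsFlag v) :
      IsFlag (g • v) := by
    refine ⟨fun c => (two_dvd_units_smul _ _).mpr (hv.1 c), fun i => isFacet_blockSign g (hv.2.1 i),
      fun b i i' hi hi' => hv.2.2 b i i' ?_ ?_⟩
    · exact (two_dvd_units_smul (g b) _).mp hi
    · exact (two_dvd_units_smul (g b) _).mp hi'
  refine ⟨fun h => ?_, smul_flag g v⟩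
  simpa only [inv_smul_smul] using smul_flag g⁻¹ _ h

theorem even_ncard_of_reflection (K : BlockIndex m → ℤ) {P : (BlockIndex m → ℤ) → Prop}
    (h : ∀ y ∈ cubeBoundary m M, P y → K - y ∈ cubeBoundary m M ∧ P (K - y) ∧ K - y ≠ y) :
    Even {y : Cell m M | P y.1}.ncard := by
  classical
  have card_eq_zero : ∑ y : Cell m M with P y.1, (1 : ZMod 2) = 0 := by
    refine Finset.sum_involution
      (fun y hy => ⟨K - y.1, (h y.1 y.2 (Finset.mem_filter_univ y |>.mp hy)).1⟩) ?_ ?_ ?_ ?_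
    · exact fun _ _ => CharTwo.add_self_eq_zero 1
    · intro y hy _ fixed
      exact (h y.1 y.2 (by simpa using hy)).2.2 (congrArg Subtype.val fixed)
    · exact fun y hy => (Finset.mem_filter_univ _).mpr (h y.1 y.2 (by simpa using hy)).2.1
    · exact fun y _ => Subtype.ext (sub_sub_cancel K y.1)
  rw [Finset.sum_const, nsmul_one, ZMod.natCast_eq_zero_iff_even] at card_eq_zero
  rwa [← Set.ncard_coe_finset, Finset.coe_filter_univ] at card_eq_zero

theorem even_ncard_vertices_of_edge (hM : 2 ∣ M) {w : BlockIndex m → ℤ}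
    (hw : w ∈ cubeBoundary m M) :
    Even {y : Cell m M | IsVertex y.1 ∧ IsFacet y.1 w}.ncard := by
  refine even_ncard_of_reflection (w + w) (P := fun y => IsVertex y ∧ IsFacet y w) ?_
  rintro y hy ⟨vertex, c, -, step, off⟩
  have reflect (d : BlockIndex m) : (w + w - y) d = 2 * w d - y d := by
    simp only [Pi.sub_apply, Pi.add_apply, two_mul]
  refine ⟨⟨fun d => ?_, fun b => ?_⟩, ⟨fun d => ?_, c, ?_, ?_, fun d hd => ?_⟩, fun fixed => ?_⟩
  · rcases eq_or_ne d c with rfl | hd <;> grind [hy.1 d, hw.1 d, vertex d]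
  · obtain ⟨i, hi⟩ := hw.2 b
    exact ⟨i, by rcases eq_or_ne ⟨b, i⟩ c with rfl | hd <;> grind [vertex ⟨b, i⟩]⟩
  · grind [vertex d]
  · grind [vertex c]
  · grind
  · grind
  · grind

theorem even_ncard_cells_between (hM : 2 ∣ M) {u w : BlockIndex m → ℤ} (hu : u ∈ cubeBoundary m M)
    (hw : w ∈ cubeBoundary m M) :
    Even {y : Cell m M | IsFacet u y.1 ∧ IsFacet y.1 w}.ncard := by
  refine even_ncard_of_reflection (u + w) (P := fun y => IsFacet u y ∧ IsFacet y w) ?_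
  rintro y - ⟨⟨c, even, step, off⟩, ⟨c', even', step', off'⟩⟩
  have reflect (d : BlockIndex m) : (u + w - y) d = u d + w d - y d := by
    simp only [Pi.sub_apply, Pi.add_apply]
  have ne : c' ≠ c := by grind
  refine ⟨⟨fun d => ?_, fun b => ?_⟩, ⟨⟨c', ?_, ?_, fun d hd => ?_⟩, ⟨c, ?_, ?_, fun d hd => ?_⟩⟩,
    fun fixed => ?_⟩
  · rcases eq_or_ne d c with rfl | hd <;> grind [hu.1 d, hw.1 d]
  · obtain ⟨i, hi⟩ := hw.2 b
    exact ⟨i, by grind [eq_or_ne ⟨b, i⟩ c, eq_or_ne ⟨b, i⟩ c']⟩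
  on_goal 7 => have := congrFun fixed c
  all_goals grind

section TopCells

variable {u x y : BlockIndex m → ℤ} {b : Fin k} {i i' : Fin (m b + 1)}

/-- `u` has exactly the even coordinates `i ≠ i'` in block `b` and at most one in every other block,
so that it is a ridge: a cell of codimension one. -/
def IsRidge (u : BlockIndex m → ℤ) (b : Fin k) (i i' : Fin (m b + 1)) : Prop :=
  i ≠ i' ∧ (∀ z, 2 ∣ u ⟨b, z⟩ ↔ z = i ∨ z = i') ∧
    ∀ a ≠ b, ∀ z z', 2 ∣ u ⟨a, z⟩ → 2 ∣ u ⟨a, z'⟩ → z = z'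

theorem IsStep.eq_of_ne (step : IsStep u y ⟨b, i⟩) {z : Fin (m b + 1)} (hz : z ≠ i) :
    y ⟨b, z⟩ = u ⟨b, z⟩ :=
  step.2 _ fun h => hz (by simpa using h)

theorem IsStep.eq_of_block_ne (step : IsStep u y ⟨b, i⟩) {a : Fin k} (ha : a ≠ b)
    (z : Fin (m a + 1)) : y ⟨a, z⟩ = u ⟨a, z⟩ :=
  step.2 _ fun h => ha (congrArg Sigma.fst h)

theorem IsRidge.symm (h : IsRidge u b i i') : IsRidge u b i' i :=
  ⟨h.1.symm, fun z => (h.2.1 z).trans or_comm, h.2.2⟩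

theorem exists_isRidge_of_isTop (hM : 2 ∣ M) (hx : x ∈ cubeBoundary m M) (facet : IsFacet u x)
    (top : IsTop x) : ∃ b i i', IsRidge u b i i' ∧ |u ⟨b, i'⟩| = M := by
  obtain ⟨⟨b, i⟩, even, step⟩ := facet
  obtain ⟨i', hi'⟩ := hx.2 b
  have odd : ¬ 2 ∣ x ⟨b, i⟩ := by grind [step.1]
  have even_i' : 2 ∣ x ⟨b, i'⟩ := by grind
  have ne : i' ≠ i := by rintro rfl; exact odd even_i'
  have u_i' : x ⟨b, i'⟩ = u ⟨b, i'⟩ := step.eq_of_ne ne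
  refine ⟨b, i, i', ⟨ne.symm, fun z => ⟨fun hz => ?_, ?_⟩, fun a ha z z' hz hz' => ?_⟩, u_i' ▸ hi'⟩
  · refine or_iff_not_imp_left.mpr fun hzi => top b z i' ?_ even_i'
    rwa [step.eq_of_ne hzi]
  · rintro (rfl | rfl)
    exacts [even, u_i' ▸ even_i']
  · exact top a z z' (by rwa [step.eq_of_block_ne ha]) (by rwa [step.eq_of_block_ne ha])

theorem IsRidge.mem_of_isStep (ridge : IsRidge u b i i') (hu : u ∈ cubeBoundary m M)
    (hi' : |u ⟨b, i'⟩| = M) (step : IsStep u y ⟨b, i⟩) (hy : |y ⟨b, i⟩| ≤ M) :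
    y ∈ cubeBoundary m M ∧ IsFacet u y ∧ IsTop y := by
  obtain ⟨ne, even, even_other⟩ := ridge
  have even_i : 2 ∣ u ⟨b, i⟩ := (even i).mpr (Or.inl rfl)
  refine ⟨⟨fun d => ?_, fun a => ?_⟩, ⟨⟨b, i⟩, even_i, step⟩, fun a z z' hz hz' => ?_⟩
  · rcases eq_or_ne d ⟨b, i⟩ with rfl | hd
    · exact hy
    · exact step.2 d hd ▸ hu.1 d
  · rcases eq_or_ne a b with rfl | ha
    · exact ⟨i', by rwa [step.eq_of_ne ne.symm]⟩
    · obtain ⟨z, hz⟩ := hu.2 a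
      exact ⟨z, by rwa [step.eq_of_block_ne ha]⟩
  · rcases eq_or_ne a b with rfl | ha
    · have eq_i' (z : Fin (m a + 1)) (hz : 2 ∣ y ⟨a, z⟩) : z = i' := by
        have hzi : z ≠ i := by rintro rfl; grind [step.1]
        exact ((even z).mp (step.eq_of_ne hzi ▸ hz)).resolve_left hzi
      rw [eq_i' z hz, eq_i' z' hz']
    · rw [step.eq_of_block_ne ha] at hz hz'
      exact even_other a ha z z' hz hz'

theorem IsRidge.isStep_of_mem (ridge : IsRidge u b i i') (hM : 2 ∣ M) (hy : y ∈ cubeBoundary m M)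
    (facet : IsFacet u y) (top : IsTop y) :
    (IsStep u y ⟨b, i⟩ ∧ |u ⟨b, i'⟩| = M) ∨ (IsStep u y ⟨b, i'⟩ ∧ |u ⟨b, i⟩| = M) := by
  obtain ⟨ne, even, -⟩ := ridge
  obtain ⟨c, -, step⟩ := facet
  have even_i : 2 ∣ u ⟨b, i⟩ := (even i).mpr (Or.inl rfl)
  have even_i' : 2 ∣ u ⟨b, i'⟩ := (even i').mpr (Or.inr rfl)
  have moves_i_or_i' : c = ⟨b, i⟩ ∨ c = ⟨b, i'⟩ := by
    by_contra! hc
    exact ne (top b i i' (by rwa [step.2 _ hc.1.symm]) (by rwa [step.2 _ hc.2.symm]))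
  obtain ⟨z, hz⟩ := hy.2 b
  have even_z : 2 ∣ y ⟨b, z⟩ := by grind
  rcases moves_i_or_i' with rfl | rfl
  · have hz' : z = i' := top b z i' even_z (by rwa [step.eq_of_ne ne.symm])
    exact Or.inl ⟨step, by rw [← hz, hz', step.eq_of_ne ne.symm]⟩
  · have hz' : z = i := top b z i even_z (by rwa [step.eq_of_ne ne])
    exact Or.inr ⟨step, by rw [← hz, hz', step.eq_of_ne ne]⟩

theorem IsRidge.reflection_of_abs_lt (ridge : IsRidge u b i i') (hu : u ∈ cubeBoundary m M)
    (hi : |u ⟨b, i⟩| < M) (hi' : |u ⟨b, i'⟩| = M) (step : IsStep u y ⟨b, i⟩) :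
    u + u - y ∈ cubeBoundary m M ∧ (IsFacet u (u + u - y) ∧ IsTop (u + u - y)) ∧
      u + u - y ≠ y := by
  have reflect (d : BlockIndex m) : (u + u - y) d = 2 * u d - y d := by
    simp only [Pi.sub_apply, Pi.add_apply, two_mul]
  obtain ⟨move, off⟩ := step
  obtain ⟨mem, facet_top⟩ := ridge.mem_of_isStep (y := u + u - y) hu hi'
    ⟨by grind, by grind⟩ (by grind)
  exact ⟨mem, facet_top, fun fixed => by have := congrFun fixed ⟨b, i⟩; grind⟩

/-- The sum of the two inward moves at the corner coordinates of a ridge. -/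
def inwardMoves (u : BlockIndex m → ℤ) (b : Fin k) (i i' : Fin (m b + 1)) : BlockIndex m → ℤ :=
  fun d => if d = ⟨b, i⟩ ∨ d = ⟨b, i'⟩ then -(u d).sign else 0

theorem IsRidge.reflection_of_abs_eq (ridge : IsRidge u b i i') (hM : 0 < M)
    (hu : u ∈ cubeBoundary m M) (hi : |u ⟨b, i⟩| = M) (hi' : |u ⟨b, i'⟩| = M)
    (hy : y ∈ cubeBoundary m M) (step : IsStep u y ⟨b, i⟩) :
    u + u + inwardMoves u b i i' - y ∈ cubeBoundary m M ∧
      (IsFacet u (u + u + inwardMoves u b i i' - y) ∧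
        IsTop (u + u + inwardMoves u b i i' - y)) ∧
      u + u + inwardMoves u b i i' - y ≠ y := by
  have reflect (d : BlockIndex m) : (u + u + inwardMoves u b i i' - y) d =
      2 * u d + (if d = ⟨b, i⟩ ∨ d = ⟨b, i'⟩ then -(u d).sign else 0) - y d := by
    simp only [Pi.sub_apply, Pi.add_apply, two_mul, inwardMoves]
  have ne : (⟨b, i'⟩ : BlockIndex m) ≠ ⟨b, i⟩ := by grind [ridge.1]
  obtain ⟨move, off⟩ := step
  have inward : y ⟨b, i⟩ = u ⟨b, i⟩ - (u ⟨b, i⟩).sign := by grind [hy.1 ⟨b, i⟩]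
  have at_i := reflect ⟨b, i⟩
  have at_i' := reflect ⟨b, i'⟩
  rw [if_pos (Or.inl rfl)] at at_i
  rw [if_pos (Or.inr rfl), off _ ne] at at_i'
  obtain ⟨mem, facet_top⟩ := ridge.symm.mem_of_isStep
    (y := u + u + inwardMoves u b i i' - y) hu hi ⟨by grind, by grind⟩ (by grind)
  exact ⟨mem, facet_top, fun fixed => by have := congrFun fixed ⟨b, i⟩; grind⟩

theorem even_ncard_top_cofacets (hM : 2 ∣ M) (hM0 : 0 < M) (hu : u ∈ cubeBoundary m M) :
    Even {y : Cell m M | IsFacet u y.1 ∧ IsTop y.1}.ncard := by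
  rcases Set.eq_empty_or_nonempty {y : Cell m M | IsFacet u y.1 ∧ IsTop y.1} with
    empty | ⟨x, facet, top⟩
  · simp [empty]
  obtain ⟨b, i, i', ridge, hi'⟩ := exists_isRidge_of_isTop hM x.2 facet top
  rcases (hu.1 ⟨b, i⟩).lt_or_eq with hi | hi
  · refine even_ncard_of_reflection (u + u) (P := fun y => IsFacet u y ∧ IsTop y) ?_
    rintro y hy ⟨facet, top⟩
    rcases ridge.isStep_of_mem hM hy facet top with ⟨step, -⟩ | ⟨-, corner⟩
    · exact ridge.reflection_of_abs_lt hu hi hi' step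
    · exact absurd corner hi.ne
  · refine even_ncard_of_reflection (u + u + inwardMoves u b i i')
      (P := fun y => IsFacet u y ∧ IsTop y) ?_
    rintro y hy ⟨facet, top⟩
    rcases ridge.isStep_of_mem hM hy facet top with ⟨step, -⟩ | ⟨step, -⟩
    · exact ridge.reflection_of_abs_eq hM0 hu hi hi' hy step
    · have inward_symm : inwardMoves u b i i' = inwardMoves u b i' i :=
        funext fun _ => if_congr or_comm rfl rfl
      exact inward_symm ▸ ridge.symm.reflection_of_abs_eq hM0 hu hi' hi hy step

end TopCells

theorem isFlag_update_iff {N : ℕ} {v : Fin (N + 1) → Cell m M} (hv : IsFlag v) (t : Fin (N + 1))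
    (y : Cell m M) :
    IsFlag (Function.update v t y) ↔ (t = 0 → IsVertex y.1) ∧
      (∀ i : Fin N, i.succ = t → IsFacet (v i.castSucc).1 y.1) ∧
      (∀ i : Fin N, i.castSucc = t → IsFacet y.1 (v i.succ).1) ∧
      (t = Fin.last N → IsTop y.1) := by
  have ne (i : Fin N) : i.castSucc ≠ i.succ := i.castSucc_lt_succ.ne
  obtain ⟨bot, facets, top⟩ := hv
  simp only [IsFlag, Function.update_apply]
  constructor
  · rintro ⟨bot', facets', top'⟩
    grind
  · rintro ⟨bot', below, above, top'⟩
    grind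

theorem even_ncard_flag_completions (hM : 2 ∣ M) (hM0 : 0 < M) {N : ℕ} (t : Fin (N + 2))
    (w : Fin (N + 1) → Cell m M) :
    Even {x : Cell m M | IsFlag (t.insertNth x w : Fin (N + 2) → Cell m M)}.ncard := by
  rcases Set.eq_empty_or_nonempty
    {x : Cell m M | IsFlag (t.insertNth x w : Fin (N + 2) → Cell m M)} with empty | ⟨x, hx⟩
  · simp [empty]
  set v : Fin (N + 2) → Cell m M := t.insertNth x w
  have flag : IsFlag v := hx
  have insert_eq (y : Cell m M) :
      (t.insertNth y w : Fin (N + 2) → Cell m M) = Function.update v t y :=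
    (Fin.update_insertNth (α := fun _ => Cell m M) t x y w).symm
  simp only [insert_eq, isFlag_update_iff flag]
  induction t using Fin.cases with
  | zero =>
    convert even_ncard_vertices_of_edge hM (v (Fin.succ 0)).2 using 4 with y
    exact ⟨fun h => ⟨h.1 rfl, h.2.2.1 0 rfl⟩,
      fun h => ⟨fun _ => h.1, by grind, by grind [Fin.castSucc_eq_zero_iff], by grind⟩⟩
  | succ t =>
    induction t using Fin.lastCases with
    | last =>
      convert even_ncard_top_cofacets hM hM0 (v (Fin.last N).castSucc).2 using 4 with y
      exact ⟨fun h => ⟨h.2.1 _ rfl, h.2.2.2 rfl⟩,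
        fun h => ⟨by grind, by grind, by grind, fun _ => h.2⟩⟩
    | cast t =>
      convert even_ncard_cells_between hM (v t.castSucc.castSucc).2 (v t.succ.succ).2 using 4 with y
      exact ⟨fun h => ⟨h.2.1 _ rfl, h.2.2.1 t.succ rfl⟩,
        fun h => ⟨by grind, by grind, by grind, by grind⟩⟩

end CellComplex

/-! ### The standard labelling -/

section LeadingSign

variable {k : ℕ} {m : Fin k → ℕ} {M : ℤ} {x y : BlockIndex m → ℤ} {b : Fin k}

/-- The index of the first nonzero coordinate of block `b`; a point of `cubeBoundary m M` with
`0 < M` always has one. -/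
noncomputable def leadIndex (x : BlockIndex m → ℤ) (b : Fin k) : Fin (m b + 1) :=
  sInf {i | x ⟨b, i⟩ ≠ 0}

/-- The sign of the first nonzero coordinate of block `b`. -/
noncomputable def leadSign (x : BlockIndex m → ℤ) (b : Fin k) : ℤˣ :=
  if 0 < x ⟨b, leadIndex x b⟩ then 1 else -1

theorem leadIndex_eq {i : Fin (m b + 1)} (ne : x ⟨b, i⟩ ≠ 0) (before : ∀ z < i, x ⟨b, z⟩ = 0) :
    leadIndex x b = i :=
  IsLeast.csInf_eq ⟨ne, fun z hz => not_lt.mp fun lt => hz (before z lt)⟩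

theorem eq_zero_of_lt_leadIndex {i : Fin (m b + 1)} (hi : i < leadIndex x b) : x ⟨b, i⟩ = 0 :=
  not_not.mp fun ne => notMem_of_lt_csInf hi (OrderBot.bddBelow _) ne

theorem leadIndex_ne_zero (hM : 0 < M) (hx : x ∈ cubeBoundary m M) (b : Fin k) :
    x ⟨b, leadIndex x b⟩ ≠ 0 := by
  obtain ⟨i, hi⟩ := hx.2 b
  exact csInf_mem (s := {i | x ⟨b, i⟩ ≠ 0}) ⟨i, abs_ne_zero.mp (hi ▸ hM.ne')⟩

theorem leadIndex_congr (h : ∀ i, y ⟨b, i⟩ = x ⟨b, i⟩) : leadIndex y b = leadIndex x b := by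
  simp only [leadIndex, h]

theorem leadSign_congr (h : ∀ i, y ⟨b, i⟩ = x ⟨b, i⟩) : leadSign y b = leadSign x b := by
  simp only [leadSign, leadIndex_congr h, h]

theorem leadIndex_blockSign (g : Fin k → ℤˣ) (x : BlockIndex m → ℤ) (b : Fin k) :
    leadIndex (blockSign g x) b = leadIndex x b := by
  simp only [leadIndex, blockSign, ne_eq, smul_eq_zero_iff_eq]

theorem leadSign_blockSign (hM : 0 < M) (hx : x ∈ cubeBoundary m M) (g : Fin k → ℤˣ) (b : Fin k) :
    leadSign (blockSign g x) b = g b * leadSign x b := by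
  have ne := leadIndex_ne_zero hM hx b
  simp only [leadSign, leadIndex_blockSign, blockSign]
  rcases Int.units_eq_one_or (g b) with hg | hg
  · rw [hg, one_smul, one_mul]
  · rw [hg, Units.neg_smul, one_smul, neg_mul, one_mul]
    split_ifs <;> first | omega | rfl

/-- The cells all of whose leading signs are positive form a fundamental domain for the sign
changes of blocks. -/
def IsPositive (v : Cell m M) : Prop := ∀ b, leadSign v.1 b = 1

theorem existsUnique_isPositive_smul (hM : 0 < M) (v : Cell m M) :
    ∃! g : Fin k → ℤˣ, IsPositive (g • v) := by
  simp only [IsPositive, coe_smul_cell, leadSign_blockSign hM v.2]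
  refine ⟨leadSign v.1, fun b => Int.units_mul_self _, fun g hg => funext fun b => ?_⟩
  rw [eq_inv_of_mul_eq_one_left (hg b), Int.units_inv_eq_self]

section Update

variable {l : Fin (m b + 1)} {r : ℤ}

theorem update_apply_of_block_ne {a : Fin k} (ha : a ≠ b) (i : Fin (m a + 1)) :
    Function.update x ⟨b, l⟩ r ⟨a, i⟩ = x ⟨a, i⟩ :=
  Function.update_of_ne (fun h => ha (congrArg Sigma.fst h)) _ _

theorem leadIndex_update (hl : l < leadIndex x b) (hr : r ≠ 0) (a : Fin k) :
    (leadIndex (Function.update x ⟨b, l⟩ r) a : ℕ) =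
      if b = a then (l : ℕ) else leadIndex x a := by
  split_ifs with h
  · subst h
    rw [leadIndex_eq (i := l) (by rwa [Function.update_self]) fun z hz => ?_]
    rw [Function.update_of_ne fun h => hz.ne (by simpa using h)]
    exact eq_zero_of_lt_leadIndex (hz.trans hl)
  · exact congrArg _ (leadIndex_congr (update_apply_of_block_ne (Ne.symm h)))

theorem IsStep.leadSign_eq_or (hM : 0 < M) (hx : x ∈ cubeBoundary m M) (even : 2 ∣ x ⟨b, l⟩)
    (step : IsStep x y ⟨b, l⟩) : leadSign y b = leadSign x b ∨
      l < leadIndex x b ∧ y = Function.update x ⟨b, l⟩ (-leadSign x b : ℤ) := by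
  have ne := leadIndex_ne_zero hM hx b
  have before (z : Fin (m b + 1)) (hz : z < leadIndex x b) : x ⟨b, z⟩ = 0 :=
    eq_zero_of_lt_leadIndex hz
  rcases lt_or_ge l (leadIndex x b) with lt | ge
  · have index : leadIndex y b = l :=
      leadIndex_eq (by grind [step.1]) fun z hz =>
        (step.eq_of_ne hz.ne).trans (before z (hz.trans lt))
    refine or_iff_not_imp_left.mpr fun flip => ⟨lt, Function.eq_update_iff.mpr ⟨?_, step.2⟩⟩
    rw [leadSign, index] at flip
    have value : y ⟨b, l⟩ = 1 ∨ y ⟨b, l⟩ = -1 := by grind [step.1]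
    rcases Int.units_eq_one_or (leadSign x b) with hs | hs <;>
      rcases value with hv | hv <;> simp_all
  · have same_sign : 0 < y ⟨b, leadIndex x b⟩ ↔ 0 < x ⟨b, leadIndex x b⟩ := by
      rcases ge.eq_or_lt with eq | lt
      · grind [step.1]
      · rw [step.eq_of_ne lt.ne]
    have index : leadIndex y b = leadIndex x b := by
      refine leadIndex_eq ?_ fun z hz =>
        (step.eq_of_ne (hz.trans_le ge).ne).trans (before z hz)
      rcases ge.eq_or_lt with eq | lt
      · grind [step.1]
      · rwa [step.eq_of_ne lt.ne]
    left
    simp only [leadSign, index, same_sign]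

end Update

/-- The isomorphism from the multiplicative group `{1, -1}` to the additive group `ZMod 2`. -/
def signBit (u : ℤˣ) : ZMod 2 := if u = 1 then 0 else 1

theorem signBit_mul (u v : ℤˣ) : signBit (u * v) = signBit u + signBit v := by
  revert u v; decide

theorem signBit_injective : Function.Injective signBit := by decide

/-- The labelling of the cells by the product of the leading signs of the blocks in `S`. -/
noncomputable def stdLabel (S : Finset (Fin k)) (v : Cell m M) : ZMod 2 :=
  signBit (∏ b ∈ S, leadSign v.1 b)

theorem stdLabel_smul (hM : 0 < M) (S : Finset (Fin k)) (g : Fin k → ℤˣ) (v : Cell m M) :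
    stdLabel S (g • v) = stdLabel S v + signBit (∏ b ∈ S, g b) := by
  simp only [stdLabel, coe_smul_cell, leadSign_blockSign hM v.2, Finset.prod_mul_distrib,
    signBit_mul, add_comm]

theorem exists_update_of_stdLabel_ne (hM : 0 < M) {S : Finset (Fin k)} {v w : Cell m M}
    (facet : IsFacet v.1 w.1) (ne : stdLabel S v ≠ stdLabel S w) :
    ∃ b ∈ S, ∃ l < leadIndex v.1 b, w.1 = Function.update v.1 ⟨b, l⟩ (-leadSign v.1 b : ℤ) := by
  obtain ⟨⟨b, l⟩, even, step⟩ := facet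
  have block_eq (a : Fin k) (ha : a ≠ b) : leadSign w.1 a = leadSign v.1 a :=
    leadSign_congr (step.eq_of_block_ne ha)
  obtain ⟨a, ha, flip⟩ : ∃ a ∈ S, leadSign w.1 a ≠ leadSign v.1 a := by
    by_contra! same
    exact ne (congrArg signBit (Finset.prod_congr rfl same)).symm
  obtain rfl : a = b := not_not.mp fun hab => flip (block_eq a hab)
  exact ⟨a, ha, l, (step.leadSign_eq_or hM v.2 even).resolve_left flip⟩

end LeadingSign

section Visits

variable {k N : ℕ} {a B : Fin N → Fin k}

/-- The number of indices before `l` at which the sequence `a` takes the value `b`. -/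
def visits (a : Fin N → Fin k) (b : Fin k) : Fin (N + 1) → ℕ :=
  Fin.partialSum fun i => if a i = b then 1 else 0

theorem visits_zero (a : Fin N → Fin k) (b : Fin k) : visits a b 0 = 0 :=
  Fin.partialSum_zero _

theorem visits_succ (a : Fin N → Fin k) (b : Fin k) (i : Fin N) :
    visits a b i.succ = visits a b i.castSucc + if a i = b then 1 else 0 :=
  Fin.partialSum_succ _ i

theorem visits_mono (a : Fin N → Fin k) (b : Fin k) : Monotone (visits a b) :=
  Fin.monotone_iff_le_succ.mpr fun i => (Nat.le_add_right _ _).trans (visits_succ a b i).ge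

theorem visits_last (a : Fin N → Fin k) (b : Fin k) :
    visits a b (Fin.last N) = Finset.card {i | a i = b} := by
  rw [Finset.card_filter, visits, Fin.partialSum, Fin.val_last,
    List.take_of_length_le (List.length_ofFn).le, List.sum_ofFn]

theorem eq_of_le_of_visits_last_le (le : ∀ i, B i ≤ a i)
    (visits_le : ∀ b, visits B b (Fin.last N) ≤ visits a b (Fin.last N)) : B = a := by
  -- Compare the total weights of `a` and `B`, where `b` has the weight `k - b`.
  have weighted_sum (c : Fin N → Fin k) :
      ∑ i, (k - c i : ℕ) = ∑ b, visits c b (Fin.last N) * (k - b : ℕ) := by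
    simp only [← Finset.sum_fiberwise' Finset.univ c fun b => k - (b : ℕ), Finset.sum_const,
      smul_eq_mul, visits_last]
  have sum_eq : ∑ i, (k - a i : ℕ) = ∑ i, (k - B i : ℕ) := by
    refine le_antisymm (Finset.sum_le_sum fun i _ => Nat.sub_le_sub_left (le i) k) ?_
    rw [weighted_sum, weighted_sum]
    exact Finset.sum_le_sum fun b _ => Nat.mul_le_mul_right _ (visits_le b)
  have weight_eq := (Finset.sum_eq_sum_iff_of_le fun i _ => Nat.sub_le_sub_left (le i) k).mp sum_eq
  funext i
  grind [weight_eq i (Finset.mem_univ i)]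

theorem descent_rigid {J : Fin (N + 1) → Fin k → ℕ} (le : ∀ i, B i ≤ a i)
    (start : ∀ b, J 0 b ≤ visits a b (Fin.last N))
    (drop : ∀ i b, J i.succ b + (if B i = b then 1 else 0) ≤ J i.castSucc b) :
    B = a ∧ ∀ l b, J l b + visits a b l = visits a b (Fin.last N) := by
  have anti (b : Fin k) : Antitone fun l => J l b + visits B b l :=
    Fin.antitone_iff_succ_le.mpr fun i => by grind [visits_succ B b i]
  have le_start (l : Fin (N + 1)) (b : Fin k) : J l b + visits B b l ≤ visits a b (Fin.last N) :=
    (anti b l.zero_le).trans (by simpa only [visits_zero, add_zero] using start b)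
  have B_eq : B = a := eq_of_le_of_visits_last_le le fun b =>
    (Nat.le_add_left _ _).trans (le_start (Fin.last N) b)
  subst B_eq
  refine ⟨rfl, fun l b => le_antisymm (le_start l b) ?_⟩
  exact (Nat.le_add_left _ _).trans (anti b l.le_last)

end Visits

section StandardFlag

variable {k N : ℕ} {m : Fin k → ℕ} {M : ℤ} {a : Fin N → Fin k}

/-- The cells of the standard flag. Every block starts at `(0, …, 0, M)`, and its `j`-th visit by
`a` fills the last zero with `(-1) ^ j`, which reverses the leading sign. -/
def stdFlag (m : Fin k → ℕ) (M : ℤ) (a : Fin N → Fin k) (l : Fin (N + 1)) : BlockIndex m → ℤ :=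
  fun c => if (c.2 : ℕ) = m c.1 then M else
    if m c.1 ≤ c.2 + visits a c.1 l then (-1) ^ (m c.1 - c.2) else 0

theorem stdFlag_mem (hM : 0 < M) (l : Fin (N + 1)) : stdFlag m M a l ∈ cubeBoundary m M := by
  refine ⟨fun c => ?_, fun b => ⟨Fin.last _, by simp [stdFlag, abs_of_pos hM]⟩⟩
  unfold stdFlag
  split_ifs
  · exact (abs_of_pos hM).le
  · rw [abs_neg_one_pow]
    exact hM
  · exact abs_zero.trans_le hM.le

theorem leadIndex_stdFlag (hM : 0 < M) (hm : ∀ b, visits a b (Fin.last N) = m b)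
    (l : Fin (N + 1)) (b : Fin k) :
    (leadIndex (stdFlag m M a l) b : ℕ) = m b - visits a b l := by
  have ne (i : ℕ) : (-1 : ℤ) ^ i ≠ 0 := pow_ne_zero _ (by decide)
  have le := visits_mono a b l.le_last
  rw [leadIndex_eq (i := ⟨m b - visits a b l, by omega⟩)] <;> simp only [stdFlag]
  · grind
  · intro z hz
    rw [Fin.lt_def] at hz
    grind

theorem leadSign_stdFlag (hM : 0 < M) (hm : ∀ b, visits a b (Fin.last N) = m b)
    (l : Fin (N + 1)) (b : Fin k) : leadSign (stdFlag m M a l) b = (-1) ^ visits a b l := by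
  have le := visits_mono a b l.le_last
  have value : stdFlag m M a l ⟨b, leadIndex (stdFlag m M a l) b⟩ =
      if visits a b l = 0 then M else (-1) ^ visits a b l := by
    rw [stdFlag, leadIndex_stdFlag hM hm]
    grind
  rw [leadSign, value]
  rcases Nat.even_or_odd (visits a b l) with even | odd
  · rw [even.neg_one_pow, even.neg_one_pow, if_pos (by split_ifs <;> omega)]
  · rw [odd.neg_one_pow, odd.neg_one_pow, if_neg odd.pos.ne']
    rfl

theorem stdFlag_succ (hM : 0 < M) (hm : ∀ b, visits a b (Fin.last N) = m b) (i : Fin N)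
    (l : Fin (m (a i) + 1)) (hl : (l : ℕ) + visits a (a i) i.succ = m (a i)) :
    stdFlag m M a i.succ = Function.update (stdFlag m M a i.castSucc) ⟨a i, l⟩
      (-leadSign (stdFlag m M a i.castSucc) (a i) : ℤ) := by
  have visits_a := visits_succ a (a i) i
  rw [if_pos rfl] at visits_a
  refine Function.eq_update_iff.mpr ⟨?_, ?_⟩
  · have exponent : m (a i) - (l : ℕ) = visits a (a i) i.castSucc + 1 := by omega
    rw [leadSign_stdFlag hM hm]
    simp only [stdFlag]
    rw [if_neg (by omega), if_pos hl.ge, exponent, pow_succ]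
    push_cast
    ring
  · rintro ⟨b, z⟩ hz
    rcases eq_or_ne (a i) b with rfl | hb
    · have hzl : (z : ℕ) ≠ l := fun h => hz (by rw [Fin.ext h])
      grind [stdFlag]
    · simp only [stdFlag, visits_succ, if_neg hb, add_zero]

theorem exists_stdFlag_succ (hM : 0 < M) (hm : ∀ b, visits a b (Fin.last N) = m b) (i : Fin N) :
    ∃ l < leadIndex (stdFlag m M a i.castSucc) (a i),
      stdFlag m M a i.succ = Function.update (stdFlag m M a i.castSucc) ⟨a i, l⟩
        (-leadSign (stdFlag m M a i.castSucc) (a i) : ℤ) := by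
  have visits_a := visits_succ a (a i) i
  rw [if_pos rfl] at visits_a
  have le := (visits_mono a (a i) i.succ.le_last).trans_eq (hm (a i))
  refine ⟨⟨m (a i) - visits a (a i) i.succ, by omega⟩, ?_, stdFlag_succ hM hm i _ (by grind)⟩
  rw [Fin.lt_def, leadIndex_stdFlag hM hm]
  grind

theorem isFlag_stdFlag (hM : 0 < M) (hM2 : 2 ∣ M) (hm : ∀ b, visits a b (Fin.last N) = m b)
    {v : Fin (N + 1) → Cell m M} (hv : ∀ l, (v l).1 = stdFlag m M a l) : IsFlag v := by
  refine ⟨fun c => ?_, fun i => ?_, fun b => ?_⟩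
  · rw [hv, stdFlag, visits_zero]
    split_ifs
    · exact hM2
    · grind
    · exact dvd_zero 2
  · obtain ⟨l, hl, eq⟩ := exists_stdFlag_succ hM hm i
    have zero : (v i.castSucc).1 ⟨a i, l⟩ = 0 := by
      rw [hv]
      exact eq_zero_of_lt_leadIndex hl
    refine ⟨⟨a i, l⟩, zero ▸ dvd_zero 2, ?_, fun d hd => ?_⟩
    · rw [zero, hv, eq, Function.update_self]
      rcases Int.units_eq_one_or (leadSign (stdFlag m M a i.castSucc) (a i)) with h | h <;> simp [h]
    · rw [hv, hv, eq, Function.update_of_ne hd]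
  · have even_imp_last (i : Fin (m b + 1)) (even : 2 ∣ (v (Fin.last N)).1 ⟨b, i⟩) :
        (i : ℕ) = m b := by
      by_contra ne
      rw [hv, stdFlag, if_neg ne, if_pos (by grind)] at even
      rcases neg_one_pow_eq_or ℤ (m b - i) with h | h <;> simp [h] at even
    exact fun i i' hi hi' => Fin.ext ((even_imp_last i hi).trans (even_imp_last i' hi').symm)

theorem stdLabel_stdFlag_ne (hM : 0 < M) (hm : ∀ b, visits a b (Fin.last N) = m b)
    {v : Fin (N + 1) → Cell m M} (hv : ∀ l, (v l).1 = stdFlag m M a l) (i : Fin N)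
    {S : Finset (Fin k)} (mem : a i ∈ S) :
    stdLabel S (v i.castSucc) ≠ stdLabel S (v i.succ) := by
  have label (l : Fin (N + 1)) :
      stdLabel S (v l) = signBit ((-1) ^ ∑ b ∈ S, visits a b l) := by
    simp only [stdLabel, hv, leadSign_stdFlag hM hm, Finset.prod_pow_eq_pow_sum]
  have sum_succ : ∑ b ∈ S, visits a b i.succ = ∑ b ∈ S, visits a b i.castSucc + 1 := by
    simp only [visits_succ, Finset.sum_add_distrib, Finset.sum_ite_eq, if_pos mem]
  rw [label, label, sum_succ, pow_succ, mul_neg_one]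
  exact signBit_injective.ne (units_ne_neg_self _)

theorem eq_stdFlag_zero_of_leadIndex {x : BlockIndex m → ℤ} (hM : 0 < M)
    (hx : x ∈ cubeBoundary m M) (sign : ∀ b, leadSign x b = 1)
    (index : ∀ b, (leadIndex x b : ℕ) = m b) : x = stdFlag m M a 0 := by
  funext ⟨b, i⟩
  have zero_of_ne (z : Fin (m b + 1)) (hz : (z : ℕ) ≠ m b) : x ⟨b, z⟩ = 0 :=
    eq_zero_of_lt_leadIndex (Fin.lt_def.mpr (by grind))
  simp only [stdFlag, visits_zero]
  split_ifs with hi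
  · obtain ⟨z, hz⟩ := hx.2 b
    have z_last : (z : ℕ) = m b := by grind
    have positive : 0 < x ⟨b, leadIndex x b⟩ := by
      by_contra nonpos
      have := sign b
      rw [leadSign, if_neg nonpos] at this
      exact absurd this (by decide)
    rw [Fin.ext ((index b).trans z_last.symm)] at positive
    rw [Fin.ext (hi.trans z_last.symm), ← hz, abs_of_pos positive]
  · grind
  · exact zero_of_ne i hi

theorem eq_stdFlag_of_stdLabel_ne (hM : 0 < M) (hm : ∀ b, visits a b (Fin.last N) = m b)
    {S : Fin N → Finset (Fin k)} (greatest : ∀ i, ∀ b ∈ S i, b ≤ a i)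
    {v : Fin (N + 1) → Cell m M} (flag : IsFlag v) (positive : IsPositive (v 0))
    (ne : ∀ i, stdLabel (S i) (v i.castSucc) ≠ stdLabel (S i) (v i.succ)) (l : Fin (N + 1)) :
    (v l).1 = stdFlag m M a l := by
  choose B B_mem L L_lt update using fun i => exists_update_of_stdLabel_ne hM (flag.2.1 i) (ne i)
  have index_succ (i : Fin N) (b : Fin k) : (leadIndex (v i.succ).1 b : ℕ) =
      if B i = b then (L i : ℕ) else leadIndex (v i.castSucc).1 b := by
    rw [update]
    exact leadIndex_update (L_lt i) (neg_ne_zero.mpr (Units.ne_zero _)) b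
  obtain ⟨B_eq, index⟩ := descent_rigid (a := a) (J := fun l b => leadIndex (v l).1 b)
    (fun i => greatest i _ (B_mem i)) (fun b => by grind) (fun i b => by
      rw [index_succ]
      split_ifs with h
      · subst h
        exact L_lt i
      · exact le_rfl)
  subst B_eq
  induction l using Fin.induction with
  | zero =>
    exact eq_stdFlag_zero_of_leadIndex hM (v 0).2 positive fun b => by grind [visits_zero]
  | succ i ih =>
    have L_eq : (L i : ℕ) + visits B (B i) i.succ = m (B i) := by
      grind
    rw [update, ih, stdFlag_succ hM hm i (L i) L_eq]

end StandardFlag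

section DiscreteBorsukUlam

variable {k N : ℕ} {m : Fin k → ℕ} {M : ℤ} {S : Fin (N + 1) → Finset (Fin k)}
  {a : Fin (N + 1) → Fin k}

open Classical in
theorem sum_edgeCup_stdLabel (hM : 0 < M) (hM2 : 2 ∣ M)
    (greatest : ∀ i, IsGreatest (S i : Set (Fin k)) (a i))
    (hm : ∀ b, Finset.card {i | a i = b} = m b) :
    ∑ v : Fin (N + 2) → Cell m M with IsPositive (v 0),
      (if IsFlag v then edgeCup (fun i => stdLabel (S i)) v else 0) = 1 := by
  have hm' (b : Fin k) : visits a b (Fin.last (N + 1)) = m b := (visits_last a b).trans (hm b)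
  let u (l : Fin (N + 2)) : Cell m M := ⟨stdFlag m M a l, stdFlag_mem hM l⟩
  have u_positive : IsPositive (u 0) := fun b => by
    rw [leadSign_stdFlag hM hm', visits_zero, pow_zero]
  have add_eq_one : ∀ x y : ZMod 2, x ≠ y → x + y = 1 := by decide
  rw [Finset.sum_eq_single u]
  · rw [if_pos (isFlag_stdFlag hM hM2 hm' fun _ => rfl)]
    exact Finset.prod_eq_one fun i _ => add_eq_one _ _
      (stdLabel_stdFlag_ne hM hm' (fun _ => rfl) i (greatest i).1)
  · intro v positive v_ne
    refine ite_eq_right_iff.mpr fun flag => not_not.mp fun cup_ne => v_ne ?_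
    refine funext fun l => Subtype.ext (eq_stdFlag_of_stdLabel_ne hM hm'
      (fun i b hb => (greatest i).2 hb) flag ((Finset.mem_filter_univ v).mp positive) ?_ l)
    intro i eq
    exact cup_ne (Finset.prod_eq_zero (Finset.mem_univ i) (CharTwo.add_eq_zero.mpr eq))
  · exact fun h => absurd ((Finset.mem_filter_univ u).mpr u_positive) h

theorem exists_isFlag_label_ne (hM : 0 < M) (hM2 : 2 ∣ M)
    (greatest : ∀ i, IsGreatest (S i : Set (Fin k)) (a i))
    (hm : ∀ b, Finset.card {i | a i = b} = m b)
    {s : Fin (N + 1) → Cell m M → ZMod 2}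
    (hs : ∀ i (g : Fin k → ℤˣ) v, s i (g • v) = s i v + signBit (∏ b ∈ S i, g b)) :
    ∃ v : Fin (N + 2) → Cell m M, IsFlag v ∧ ∀ i, s i (v i.castSucc) ≠ s i (v i.succ) := by
  classical
  by_contra! constant
  have sum_eq := sum_edgeCup_eq_of_equivariant (existsUnique_isPositive_smul hM) isFlag_smul
    (even_ncard_flag_completions hM2 hM) hs fun i => stdLabel_smul hM (S i)
  rw [sum_edgeCup_stdLabel hM hM2 greatest hm] at sum_eq
  refine zero_ne_one' (ZMod 2) (sum_eq ▸ (Finset.sum_eq_zero fun v _ => ?_).symm)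
  refine ite_eq_right_iff.mpr fun flag => ?_
  obtain ⟨i, hi⟩ := constant v flag
  exact Finset.prod_eq_zero (Finset.mem_univ i) (CharTwo.add_eq_zero.mpr hi)

end DiscreteBorsukUlam

/-! ### The Borsuk–Ulam theorem for products of cube boundaries -/

section Mesh

variable {k N : ℕ} {m : Fin k → ℕ}

theorem isCompact_cubeBoundary (m : Fin k → ℕ) (r : ℝ) : IsCompact (cubeBoundary m r) := by
  have eq : cubeBoundary m r = Set.univ.pi (fun _ => Metric.closedBall 0 r) ∩
      ⋂ b, ⋃ i, {x : BlockIndex m → ℝ | |x ⟨b, i⟩| = r} := by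
    ext x
    simp [cubeBoundary, Set.mem_pi]
  rw [eq]
  refine (isCompact_univ_pi fun _ => isCompact_closedBall 0 r).inter_right ?_
  refine isClosed_iInter fun b => isClosed_iUnion_of_finite fun i => ?_
  exact isClosed_eq (by fun_prop) continuous_const

theorem cubeBoundary_nonempty (m : Fin k → ℕ) {r : ℝ} (hr : 0 ≤ r) : (cubeBoundary m r).Nonempty :=
  ⟨fun _ => r, fun _ => (abs_of_nonneg hr).le, fun _ => ⟨0, abs_of_nonneg hr⟩⟩

variable {M : ℤ}

/-- The barycenter of a cell, in the unit cube. -/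
noncomputable def barycenter (v : Cell m M) : BlockIndex m → ℝ := fun c => v.1 c / M

theorem barycenter_mem (hM : 0 < M) (v : Cell m M) : barycenter v ∈ cubeBoundary m (1 : ℝ) := by
  have hM' : (0 : ℝ) < M := Int.cast_pos.mpr hM
  have abs_eq (c : BlockIndex m) : |barycenter v c| = (|v.1 c| : ℤ) / M := by
    rw [barycenter, abs_div, abs_of_pos hM', Int.cast_abs]
  refine ⟨fun c => ?_, fun b => ?_⟩
  · rw [abs_eq, div_le_one hM']
    exact Int.cast_le.mpr (v.2.1 c)
  · obtain ⟨i, hi⟩ := v.2.2 b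
    exact ⟨i, by rw [abs_eq, hi, div_self hM'.ne']⟩

theorem barycenter_smul (g : Fin k → ℤˣ) (v : Cell m M) :
    barycenter (g • v) = blockSign g (barycenter v) := by
  funext c
  simp only [barycenter, coe_smul_cell, blockSign, Units.smul_def, smul_eq_mul, zsmul_eq_mul,
    Int.cast_mul, mul_div_assoc]

theorem IsFlag.dist_barycenter_le (hM : 0 < M) {v : Fin (N + 1) → Cell m M} (flag : IsFlag v)
    (l : Fin (N + 1)) : dist (barycenter (v l)) (barycenter (v 0)) ≤ N / M := by
  have hM' : (0 : ℝ) < M := Int.cast_pos.mpr hM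
  have abs_sub_le (c : BlockIndex m) : |(v l).1 c - (v 0).1 c| ≤ l := by
    induction l using Fin.induction with
    | zero => simp
    | succ i ih =>
      obtain ⟨d, -, move, off⟩ := flag.2.1 i
      rcases eq_or_ne c d with rfl | hc <;> grind
  refine (dist_pi_le_iff (by positivity)).mpr fun c => ?_
  rw [Real.dist_eq, barycenter, barycenter, ← sub_div, abs_div, abs_of_pos hM']
  gcongr
  exact_mod_cast (abs_sub_le c).trans (Nat.cast_le.mpr l.is_le)

end Mesh

section SignLabel

/-- The sign of `t` as an element of `ZMod 2`, where `z` decides for `t = 0`. -/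
noncomputable def signLabel (t : ℝ) (z : ZMod 2) : ZMod 2 :=
  if 0 < t then 0 else if t < 0 then 1 else z

theorem signLabel_smul (u : ℤˣ) (t : ℝ) (z : ZMod 2) :
    signLabel (u • t) (z + signBit u) = signLabel t z + signBit u := by
  have one_add_one : (1 + 1 : ZMod 2) = 0 := by decide
  rcases Int.units_eq_one_or u with rfl | rfl
  · simp [signBit]
  · rcases lt_trichotomy t 0 with h | h | h <;>
      simp [signLabel, signBit, h, one_add_one, not_lt_of_gt]

theorem mul_nonpos_of_signLabel_ne {t t' : ℝ} {z z' : ZMod 2}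
    (ne : signLabel t z ≠ signLabel t' z') : t * t' ≤ 0 := by
  by_contra! pos
  rcases pos_and_pos_or_neg_and_neg_of_mul_pos pos with ⟨h, h'⟩ | ⟨h, h'⟩ <;>
    simp [signLabel, h, h', not_lt_of_gt] at ne

end SignLabel

section BorsukUlam

variable {k : ℕ} {m : Fin k → ℕ}

section FinIndexed

variable {N : ℕ} {S : Fin (N + 1) → Finset (Fin k)} {a : Fin (N + 1) → Fin k}
  {f : (BlockIndex m → ℝ) → Fin (N + 1) → ℝ}

theorem exists_near_mul_nonpos (greatest : ∀ i, IsGreatest (S i : Set (Fin k)) (a i))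
    (hm : ∀ b, Finset.card {i | a i = b} = m b)
    (equivariant : ∀ g, ∀ x ∈ cubeBoundary m (1 : ℝ), ∀ i,
      f (blockSign g x) i = (∏ b ∈ S i, g b) • f x i) {δ : ℝ} (hδ : 0 < δ) :
    ∃ x : Fin (N + 2) → BlockIndex m → ℝ, (∀ l, x l ∈ cubeBoundary m (1 : ℝ)) ∧
      (∀ l, dist (x l) (x 0) < δ) ∧ ∀ i, f (x i.castSucc) i * f (x i.succ) i ≤ 0 := by
  obtain ⟨n, hn⟩ := exists_nat_gt ((N + 1 : ℕ) / δ)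
  have n_pos : 0 < n := Nat.cast_pos.mp ((by positivity : (0 : ℝ) ≤ _).trans_lt hn)
  have hM : (0 : ℤ) < 2 * n := by omega
  have mesh_lt : (N + 1 : ℕ) / ((2 * n : ℤ) : ℝ) < δ := by
    rw [div_lt_iff₀ hδ] at hn
    rw [div_lt_iff₀ (Int.cast_pos.mpr hM)]
    push_cast at hn ⊢
    nlinarith
  obtain ⟨v, flag, ne⟩ := exists_isFlag_label_ne hM (dvd_mul_right 2 _) greatest hm
    (s := fun i v => signLabel (f (barycenter v) i) (stdLabel (S i) v)) fun i g v => by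
      rw [barycenter_smul, equivariant g _ (barycenter_mem hM v), stdLabel_smul hM, signLabel_smul]
  exact ⟨fun l => barycenter (v l), fun l => barycenter_mem hM _,
    fun l => (flag.dist_barycenter_le hM l).trans_lt mesh_lt,
    fun i => mul_nonpos_of_signLabel_ne (ne i)⟩

theorem exists_mem_cubeBoundary_eq_zero_fin
    (greatest : ∀ i, IsGreatest (S i : Set (Fin k)) (a i))
    (hm : ∀ b, Finset.card {i | a i = b} = m b) (hf : ContinuousOn f (cubeBoundary m 1))
    (equivariant : ∀ g, ∀ x ∈ cubeBoundary m (1 : ℝ), ∀ i,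
      f (blockSign g x) i = (∏ b ∈ S i, g b) • f x i) :
    ∃ x ∈ cubeBoundary m (1 : ℝ), f x = 0 := by
  have compact := isCompact_cubeBoundary m 1
  obtain ⟨x₀, hx₀, minimal⟩ :=
    compact.exists_isMinOn (cubeBoundary_nonempty m zero_le_one) hf.norm
  refine ⟨x₀, hx₀, by_contra fun ne => ?_⟩
  have norm_pos : 0 < ‖f x₀‖ := norm_pos_iff.mpr ne
  obtain ⟨δ, hδ, close⟩ := Metric.uniformContinuousOn_iff.mp
    (compact.uniformContinuousOn_of_continuous hf) _ norm_pos
  obtain ⟨x, mem, near, nonpos⟩ := exists_near_mul_nonpos greatest hm equivariant hδ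
  have close_apply (l : Fin (N + 2)) (i : Fin (N + 1)) : |f (x l) i - f (x 0) i| < ‖f x₀‖ :=
    (dist_le_pi_dist _ _ i).trans_lt (close _ (mem l) _ (mem 0) (near l))
  have smaller : ‖f (x 0)‖ < ‖f x₀‖ := by
    refine (pi_norm_lt_iff norm_pos).mpr fun i => ?_
    rw [Real.norm_eq_abs]
    have h₁ := abs_lt.mp (close_apply i.castSucc i)
    have h₂ := abs_lt.mp (close_apply i.succ i)
    by_contra! large
    rcases le_abs.mp large with h | h <;> nlinarith [nonpos i]
  exact absurd (minimal (mem 0)) (not_le.mpr smaller)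

end FinIndexed

theorem exists_mem_cubeBoundary_eq_zero {κ : Type*} [Fintype κ] {S : κ → Finset (Fin k)}
    {a : κ → Fin k} {f : (BlockIndex m → ℝ) → κ → ℝ}
    (greatest : ∀ i, IsGreatest (S i : Set (Fin k)) (a i))
    (hm : ∀ b, Finset.card {i | a i = b} = m b) (hf : ContinuousOn f (cubeBoundary m 1))
    (equivariant : ∀ g, ∀ x ∈ cubeBoundary m (1 : ℝ), ∀ i,
      f (blockSign g x) i = (∏ b ∈ S i, g b) • f x i) :
    ∃ x ∈ cubeBoundary m (1 : ℝ), f x = 0 := by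
  rcases isEmpty_or_nonempty κ with empty | nonempty
  · obtain ⟨x, hx⟩ := cubeBoundary_nonempty m (zero_le_one (α := ℝ))
    exact ⟨x, hx, Subsingleton.elim _ _⟩
  obtain ⟨N, hN⟩ := Nat.exists_eq_add_one.mpr (Fintype.card_pos (α := κ))
  let e : Fin (N + 1) ≃ κ := (Fintype.equivFinOfCardEq hN).symm
  obtain ⟨x, hx, zero⟩ := exists_mem_cubeBoundary_eq_zero_fin (S := S ∘ e) (a := a ∘ e)
    (f := fun x => f x ∘ e) (fun i => greatest (e i))
    (fun b => (hm b ▸ Finset.card_equiv e (by simp)))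
    (continuousOn_pi.mpr fun i => continuousOn_pi.mp hf (e i))
    (fun g x hx i => equivariant g x hx (e i))
  exact ⟨x, hx, funext fun i => by simpa using congrFun zero (e.symm i)⟩

end BorsukUlam

/-! ### Equipartition -/

section Characters

variable {β E : Type*} [Fintype β] [AddCommGroup E]

theorem sum_finset_prod_units (g : β → ℤˣ) :
    ∑ S : Finset β, ((∏ b ∈ S, g b : ℤˣ) : ℤ) = if g = 1 then 2 ^ Fintype.card β else 0 := by
  have expand : ∑ S : Finset β, ((∏ b ∈ S, g b : ℤˣ) : ℤ) = ∏ b, (1 + (g b : ℤ)) := by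
    simp only [Units.coe_prod, Finset.prod_one_add, Finset.powerset_univ]
  rw [expand]
  split_ifs with h
  · simp [h]
  · obtain ⟨b, hb⟩ := Function.ne_iff.mp h
    exact Finset.prod_eq_zero (Finset.mem_univ b)
      (by simp [(Int.units_eq_one_or (g b)).resolve_left hb])

theorem two_pow_smul_eq_sum_of_characters_eq_zero [DecidableEq β] {h : (β → ℤˣ) → E}
    (eq_zero : ∀ S : Finset β, S.Nonempty → ∑ τ : β → ℤˣ, (∏ b ∈ S, τ b) • h τ = 0)
    (τ : β → ℤˣ) : (2 ^ Fintype.card β : ℤ) • h τ = ∑ ρ, h ρ := by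
  have mul_eq_one_iff (ρ : β → ℤˣ) : τ * ρ = 1 ↔ τ = ρ := by
    rw [mul_eq_one_iff_eq_inv, show ρ⁻¹ = ρ from funext fun b => Int.units_inv_eq_self (ρ b)]
  calc (2 ^ Fintype.card β : ℤ) • h τ
      = ∑ ρ, (∑ S : Finset β, ((∏ b ∈ S, (τ * ρ) b : ℤˣ) : ℤ)) • h ρ := by
        simp only [sum_finset_prod_units, mul_eq_one_iff, ite_smul, zero_smul,
          Finset.sum_ite_eq, Finset.mem_univ, if_true]
    _ = ∑ S : Finset β, (∏ b ∈ S, τ b) • ∑ ρ : β → ℤˣ, (∏ b ∈ S, ρ b) • h ρ := by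
        simp only [Finset.sum_smul, Finset.smul_sum, smul_smul, Pi.mul_apply,
          Finset.prod_mul_distrib, ← Units.smul_def]
        exact Finset.sum_comm
    _ = ∑ ρ, h ρ := by
        rw [Finset.sum_eq_single ∅ (fun S _ hS => by
          rw [eq_zero S (Finset.nonempty_iff_ne_empty.mpr hS), smul_zero]) (by simp)]
        simp

end Characters

section Equipartition

variable {k : ℕ} {ι : Type*} [Fintype ι]

/-- The dimensions of the blocks: a nonempty set of blocks whose greatest element is `b` gives one
equation for each `i : ι`, and there are `2 ^ b` such sets. -/
def blockDim (k : ℕ) (ι : Type*) [Fintype ι] (b : Fin k) : ℕ := Fintype.card ι * 2 ^ (b : ℕ)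

theorem card_fst_eq_eq_blockDim (b : Fin k) :
    Finset.card {p : Σ b : Fin k, ι × (Finset.Iio b).powerset | p.1 = b} = blockDim k ι b := by
  have image : Finset.univ.map (Function.Embedding.sigmaMk b) =
      ({p | p.1 = b} : Finset (Σ b : Fin k, ι × (Finset.Iio b).powerset)) := by
    ext ⟨b', p⟩
    constructor
    · simp +contextual [eq_comm]
    · intro h
      obtain rfl := (Finset.mem_filter_univ _).mp h
      simp
  rw [← image, Finset.card_map, Finset.card_univ, Fintype.card_prod, Fintype.card_coe,
    Finset.card_powerset, Fin.card_Iio, blockDim]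

theorem exists_mem_cubeBoundary_equipartition
    {h : ι → (Fin k → ℤˣ) → (BlockIndex (blockDim k ι) → ℝ) → ℝ}
    (continuous : ∀ i τ, Continuous (h i τ))
    (equivariant : ∀ i τ g x, h i τ (blockSign g x) = h i (g * τ) x) :
    ∃ x ∈ cubeBoundary (blockDim k ι) 1, ∀ i τ, 2 ^ k * h i τ x = ∑ ρ, h i ρ x := by
  obtain ⟨x, hx, zero⟩ := exists_mem_cubeBoundary_eq_zero
    (κ := Σ b : Fin k, ι × (Finset.Iio b).powerset)
    (S := fun p => insert p.1 p.2.2.1) (a := Sigma.fst)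
    (f := fun x p => ∑ τ : Fin k → ℤˣ, (∏ b ∈ insert p.1 p.2.2.1, τ b) • h p.2.1 τ x)
    (fun p => by grind [IsGreatest, upperBounds])
    card_fst_eq_eq_blockDim
    (by fun_prop)
    (fun g x _ p => by
      have mul_self : g * g = 1 := funext fun b => Int.units_mul_self (g b)
      rw [Finset.smul_sum, ← Equiv.sum_comp (Equiv.mulLeft g)]
      simp [equivariant, Finset.prod_mul_distrib, smul_smul, ← mul_assoc, mul_self])
  refine ⟨x, hx, fun i τ => ?_⟩
  have := two_pow_smul_eq_sum_of_characters_eq_zero (h := fun τ => h i τ x) (fun S hS => ?_) τ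
  · simpa using this
  · have := congrFun zero ⟨S.max' hS, i, S.erase (S.max' hS), Finset.mem_powerset.mpr
      fun b hb => Finset.mem_Iio.mpr (S.lt_max'_of_mem_erase_max' hS hb)⟩
    simpa [Finset.insert_erase (S.max'_mem hS)] using this

end Equipartition

section Bump

variable {X : Type*} [PseudoMetricSpace X] {δ : ℝ}

/-- A continuous approximation from below to the indicator function of an open set `U`. -/
noncomputable def bump (hδ : 0 < δ) (U : Set X) (x : X) : ℝ := 1 - thickenedIndicator hδ Uᶜ x

theorem continuous_bump (hδ : 0 < δ) (U : Set X) : Continuous (bump hδ U) :=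
  continuous_const.sub (NNReal.continuous_coe.comp (thickenedIndicator hδ Uᶜ).continuous)

theorem bump_nonneg (hδ : 0 < δ) (U : Set X) (x : X) : 0 ≤ bump hδ U x :=
  sub_nonneg.mpr (NNReal.coe_le_one.mpr (thickenedIndicator_le_one hδ _ x))

theorem bump_eq_one (hδ : 0 < δ) {U : Set X} {x : X} (h : Metric.ball x δ ⊆ U) :
    bump hδ U x = 1 := by
  have far : x ∉ Metric.thickening δ Uᶜ := by
    rw [Metric.mem_thickening_iff]
    rintro ⟨z, hz, near⟩
    exact hz (h (Metric.mem_ball'.mpr near))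
  rw [bump, thickenedIndicator_zero hδ _ far, NNReal.coe_zero, sub_zero]

theorem bump_le_indicator (hδ : 0 < δ) (U : Set X) (x : X) :
    bump hδ U x ≤ U.indicator 1 x := by
  by_cases hx : x ∈ U
  · simp [hx, bump]
  · simp [hx, bump, thickenedIndicator_one hδ Uᶜ hx]

theorem bump_apply_isometry (hδ : 0 < δ) {e : X → X} (isometry : Isometry e)
    (surjective : Function.Surjective e) (U : Set X) (x : X) :
    bump hδ U (e x) = bump hδ (e ⁻¹' U) x := by
  simp only [bump, thickenedIndicator_apply, thickenedIndicatorAux]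
  rw [← Set.image_preimage_eq Uᶜ surjective, Metric.infEDist_image isometry, Set.preimage_compl]

end Bump

section OpenSets

theorem ncard_sep_eq_sum_indicator {α : Type*} (s : Finset α) (P : α → Prop) :
    ({a ∈ (s : Set α) | P a}.ncard : ℝ) = ∑ a ∈ s, {a | P a}.indicator 1 a := by
  classical
  have coe_eq : {a ∈ (s : Set α) | P a} = ({a ∈ s | P a} : Finset α) := by simp
  rw [coe_eq, Set.ncard_coe_finset]
  simp [Set.indicator_apply]

variable {k : ℕ} {m : Fin k → ℕ}

theorem blockSign_blockSign (g : Fin k → ℤˣ) (x : BlockIndex m → ℝ) :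
    blockSign g (blockSign g x) = x :=
  funext fun c => by rw [blockSign, blockSign, smul_smul, Int.units_mul_self, one_smul]

theorem isometry_blockSign (g : Fin k → ℤˣ) :
    Isometry (blockSign g : (BlockIndex m → ℝ) → BlockIndex m → ℝ) := by
  have nnnorm_smul (u : ℤˣ) (t : ℝ) : ‖u • t‖₊ = ‖t‖₊ := NNReal.eq (abs_units_smul u t)
  refine Isometry.of_dist_eq fun x y => ?_
  simp only [dist_pi_def, blockSign, nndist_eq_nnnorm, ← smul_sub, nnnorm_smul]

variable {ι α : Type*} [Fintype ι] {O : α → (Fin k → ℤˣ) → Set (BlockIndex (blockDim k ι) → ℝ)}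
  {Γ : ι → Finset α} {B : ι → ℝ}

theorem exists_mem_cubeBoundary_ncard_ball_subset_le
    (equivariant : ∀ γ τ g x, blockSign g x ∈ O γ τ ↔ x ∈ O γ (g * τ))
    (hB : ∀ x ∈ cubeBoundary (blockDim k ι) 1, ∀ i, ∀ γ ∈ Γ i,
      ({τ | x ∈ O γ τ}.ncard : ℝ) ≤ B i) {δ : ℝ} (hδ : 0 < δ) :
    ∃ x ∈ cubeBoundary (blockDim k ι) 1, ∀ i τ,
      2 ^ k * ({γ ∈ (Γ i : Set α) | Metric.ball x δ ⊆ O γ τ}.ncard : ℝ) ≤ B i * (Γ i).card := by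
  classical
  obtain ⟨x, hx, equal⟩ := exists_mem_cubeBoundary_equipartition
    (h := fun i τ x => ∑ γ ∈ Γ i, bump hδ (O γ τ) x)
    (fun i τ => continuous_finsetSum _ fun γ _ => continuous_bump hδ _)
    (fun i τ g x => Finset.sum_congr rfl fun γ _ => by
      rw [bump_apply_isometry hδ (isometry_blockSign g)
        (Function.LeftInverse.surjective (blockSign_blockSign g))]
      congr 1
      exact Set.ext (equivariant γ τ g))
  refine ⟨x, hx, fun i τ => ?_⟩
  have ncard_le : ({γ ∈ (Γ i : Set α) | Metric.ball x δ ⊆ O γ τ}.ncard : ℝ) ≤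
      ∑ γ ∈ Γ i, bump hδ (O γ τ) x := by
    rw [ncard_sep_eq_sum_indicator]
    exact Finset.sum_le_sum fun γ _ => Set.indicator_apply_le' (fun h => (bump_eq_one hδ h).ge)
      fun _ => bump_nonneg hδ _ x
  have sum_bump_le (γ : α) (hγ : γ ∈ Γ i) : ∑ ρ, bump hδ (O γ ρ) x ≤ B i :=
    calc ∑ ρ, bump hδ (O γ ρ) x ≤ ∑ ρ, (O γ ρ).indicator 1 x :=
          Finset.sum_le_sum fun ρ _ => bump_le_indicator hδ _ x
      _ = ({ρ | x ∈ O γ ρ}.ncard : ℝ) := by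
          simpa [Set.indicator_apply] using
            (ncard_sep_eq_sum_indicator Finset.univ fun ρ => x ∈ O γ ρ).symm
      _ ≤ B i := hB x hx i γ hγ
  calc 2 ^ k * ({γ ∈ (Γ i : Set α) | Metric.ball x δ ⊆ O γ τ}.ncard : ℝ)
      ≤ 2 ^ k * ∑ γ ∈ Γ i, bump hδ (O γ τ) x := by gcongr
    _ = ∑ γ ∈ Γ i, ∑ ρ, bump hδ (O γ ρ) x := by rw [equal, Finset.sum_comm]
    _ ≤ ∑ _γ ∈ Γ i, B i := Finset.sum_le_sum sum_bump_le
    _ = B i * (Γ i).card := by rw [Finset.sum_const, nsmul_eq_mul, mul_comm]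

theorem exists_mem_cubeBoundary_ncard_mem_le (isOpen : ∀ γ τ, IsOpen (O γ τ))
    (equivariant : ∀ γ τ g x, blockSign g x ∈ O γ τ ↔ x ∈ O γ (g * τ))
    (hB : ∀ x ∈ cubeBoundary (blockDim k ι) 1, ∀ i, ∀ γ ∈ Γ i,
      ({τ | x ∈ O γ τ}.ncard : ℝ) ≤ B i) :
    ∃ x ∈ cubeBoundary (blockDim k ι) 1, ∀ i τ,
      2 ^ k * ({γ ∈ (Γ i : Set α) | x ∈ O γ τ}.ncard : ℝ) ≤ B i * (Γ i).card := by
  have radius_pos (n : ℕ) : 0 < 1 / ((n : ℝ) + 1) := Nat.one_div_pos_of_nat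
  choose x hx ncard_le using fun n =>
    exists_mem_cubeBoundary_ncard_ball_subset_le equivariant hB (radius_pos n)
  obtain ⟨y, hy, φ, φ_mono, tendsto⟩ := (isCompact_cubeBoundary (blockDim k ι) 1).tendsto_subseq hx
  have eventually_subset {U : Set (BlockIndex (blockDim k ι) → ℝ)} (hU : U ∈ nhds y) :
      ∀ᶠ n in Filter.atTop, Metric.ball (x (φ n)) (1 / ((φ n : ℝ) + 1)) ⊆ U := by
    obtain ⟨ε, hε, ball_subset⟩ := Metric.mem_nhds_iff.mp hU
    filter_upwards [Metric.tendsto_nhds.mp tendsto (ε / 2) (half_pos hε),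
      (tendsto_one_div_add_atTop_nhds_zero_nat.comp φ_mono.tendsto_atTop).eventually_lt_const
        (half_pos hε)] with n near small
    refine (Metric.ball_subset_ball' ?_).trans ball_subset
    simp only [Function.comp_apply] at near small
    linarith
  refine ⟨y, hy, fun i τ => ?_⟩
  have finite : {γ ∈ (Γ i : Set α) | y ∈ O γ τ}.Finite := (Γ i).finite_toSet.subset fun γ hγ => hγ.1
  obtain ⟨n, hn⟩ := (finite.eventually_all.mpr fun γ hγ =>
    eventually_subset ((isOpen γ τ).mem_nhds hγ.2)).exists
  refine le_trans ?_ (ncard_le (φ n) i τ)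
  gcongr 2 ^ k * (Set.ncard ?_ : ℝ)
  · exact (Γ i).finite_toSet.subset fun γ hγ => hγ.1
  · exact fun γ hγ => ⟨hγ.1, hn γ hγ⟩

end OpenSets

/-! ### Sign cells and connected components -/

section SignCell

variable {β Y : Type*} {f : β → Y → ℝ} {τ ρ : β → ℤˣ} {y : Y}

/-- The set where each `f b` has the sign `τ b`. -/
def signCell (f : β → Y → ℝ) (τ : β → ℤˣ) : Set Y := {y | ∀ b, 0 < τ b • f b y}

theorem ne_zero_of_mem_signCell (h : y ∈ signCell f τ) (b : β) : f b y ≠ 0 := fun zero =>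
  (h b).ne' (by rw [zero, smul_zero])

theorem eq_of_mem_signCell (h : y ∈ signCell f τ) (h' : y ∈ signCell f ρ) : τ = ρ := by
  funext b
  have hb := h b
  have hb' := h' b
  rcases Int.units_eq_one_or (τ b) with e | e <;> rcases Int.units_eq_one_or (ρ b) with e' | e' <;>
    simp_all [Units.smul_def, not_lt_of_gt]

theorem exists_mem_signCell (h : ∀ b, f b y ≠ 0) : ∃ τ, y ∈ signCell f τ := by
  have (b : β) : ∃ u : ℤˣ, 0 < u • f b y := by
    rcases (h b).lt_or_gt with neg | pos
    · exact ⟨-1, by simpa [Units.smul_def] using neg⟩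
    · exact ⟨1, by simpa using pos⟩
  exact Classical.skolem.mp this

theorem isOpen_setOf_inter_signCell_nonempty [Finite β] {X : Type*} [TopologicalSpace X]
    {F : X → β → Y → ℝ} (hF : ∀ b y, Continuous fun x => F x b y) (γ : Set Y) (τ : β → ℤˣ) :
    IsOpen {x | (γ ∩ signCell (F x) τ).Nonempty} := by
  have eq_iUnion : {x | (γ ∩ signCell (F x) τ).Nonempty} =
      ⋃ y ∈ γ, ⋂ b, {x | 0 < τ b • F x b y} := by
    ext x
    simp [signCell, Set.Nonempty]
  rw [eq_iUnion]
  exact isOpen_biUnion fun y _ => isOpen_iInter_of_finite fun b =>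
    isOpen_lt continuous_const ((hF b y).const_smul _)

variable [TopologicalSpace Y]

theorem subset_signCell_of_isPreconnected {C : Set Y} (hC : IsPreconnected C)
    (hf : ∀ b, Continuous (f b)) (ne_zero : ∀ z ∈ C, ∀ b, f b z ≠ 0) (hy : y ∈ C)
    (mem : y ∈ signCell f τ) : C ⊆ signCell f τ := by
  intro z hz b
  by_contra! nonpos
  obtain ⟨w, hw, zero⟩ := hC.intermediate_value hz hy ((hf b).const_smul (τ b)).continuousOn
    ⟨nonpos, (mem b).le⟩
  exact ne_zero w hw b ((smul_eq_zero_iff_eq (τ b)).mp zero)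

theorem connectedComponentIn_subset_signCell (hf : ∀ b, Continuous (f b))
    (mem : y ∈ signCell f τ) :
    connectedComponentIn {z | ∀ b, f b z ≠ 0} y ⊆ signCell f τ :=
  subset_signCell_of_isPreconnected isPreconnected_connectedComponentIn hf
    (fun _ hz => connectedComponentIn_subset _ _ hz)
    (mem_connectedComponentIn (ne_zero_of_mem_signCell mem)) mem

/-- The connected components of `U` that `γ` intersects. -/
def componentsMeeting (U γ : Set Y) : Set (Set Y) :=
  {S | ∃ y ∈ γ, y ∈ U ∧ S = connectedComponentIn U y}

theorem ncard_signCell_meeting_le_ncard_componentsMeeting (hf : ∀ b, Continuous (f b)) {γ : Set Y}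
    (finite : (componentsMeeting {z | ∀ b, f b z ≠ 0} γ).Finite) :
    {τ | (γ ∩ signCell f τ).Nonempty}.ncard ≤
      (componentsMeeting {z | ∀ b, f b z ≠ 0} γ).ncard := by
  have exists_component (τ : β → ℤˣ) (hτ : (γ ∩ signCell f τ).Nonempty) :
      ∃ S ∈ componentsMeeting {z | ∀ b, f b z ≠ 0} γ, S.Nonempty ∧ S ⊆ signCell f τ := by
    obtain ⟨z, hz, mem⟩ := hτ
    have ne_zero := ne_zero_of_mem_signCell mem
    exact ⟨_, ⟨z, hz, ne_zero, rfl⟩, ⟨z, mem_connectedComponentIn ne_zero⟩,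
      connectedComponentIn_subset_signCell hf mem⟩
  choose! S component nonempty subset using exists_component
  refine Set.ncard_le_ncard_of_injOn S component (fun τ hτ ρ hρ eq => ?_) finite
  obtain ⟨z, hz⟩ := nonempty τ hτ
  exact eq_of_mem_signCell (subset τ hτ hz) (subset ρ hρ (eq ▸ hz))

end SignCell

/-! ### Partitioning by a product of polynomials -/

section Monomials

variable {σ : Type*}

theorem degree_some_add_none (f : Option σ →₀ ℕ) : f.some.degree + f none = f.degree := by
  rw [add_comm]
  exact (Finsupp.sum_option_index f (fun _ => id) (fun _ => rfl) (fun _ _ _ => rfl)).symm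

theorem exists_injective_degree_le [Fintype σ] {N d : ℕ}
    (hN : N ≤ (Fintype.card σ + d).choose (Fintype.card σ)) :
    ∃ mon : Fin N → σ →₀ ℕ, Function.Injective mon ∧ ∀ l, (mon l).degree ≤ d := by
  classical
  have degree_eq (f : (Finset.univ : Finset (Option σ)).finsuppAntidiag d) : f.1.degree = d := by
    rw [Finsupp.degree_eq_sum]
    exact (Finset.mem_finsuppAntidiag.mp f.2).1
  have card_le : Fintype.card (Fin N) ≤
      Fintype.card ((Finset.univ : Finset (Option σ)).finsuppAntidiag d) := by
    rwa [Fintype.card_fin, Fintype.card_coe, Finset.card_finsuppAntidiag_nat_eq_choose,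
      Finset.card_univ, Fintype.card_option, Nat.add_right_comm, Nat.add_sub_cancel,
      ← Nat.choose_symm_add]
  obtain ⟨e⟩ := Function.Embedding.nonempty_of_card_le card_le
  refine ⟨fun l => (e l).1.some, fun l l' eq => e.injective (Subtype.ext ?_), fun l => ?_⟩
  · have some_eq : (e l).1.some = (e l').1.some := eq
    have none_eq : (e l).1 none = (e l').1 none := by
      have := degree_some_add_none (e l).1
      have := degree_some_add_none (e l').1
      grind
    ext (_ | i)
    · exact none_eq
    · exact DFunLike.congr_fun some_eq i
  · exact (Nat.le_add_right _ _).trans_eq ((degree_some_add_none _).trans (degree_eq _))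

end Monomials

section BlockPolynomial

open MvPolynomial

variable {k : ℕ} {m : Fin k → ℕ} {σ : Type*} {mon : ∀ b, Fin (m b + 1) → σ →₀ ℕ}

/-- For each block, the polynomial whose coefficients at the given monomials are the coordinates
of the block. -/
noncomputable def blockPolynomial (mon : ∀ b, Fin (m b + 1) → σ →₀ ℕ) (x : BlockIndex m → ℝ)
    (b : Fin k) : MvPolynomial σ ℝ :=
  ∑ l, monomial (mon b l) (x ⟨b, l⟩)

theorem eval_blockPolynomial (x : BlockIndex m → ℝ) (b : Fin k) (y : σ → ℝ) :
    eval y (blockPolynomial mon x b) = ∑ l, x ⟨b, l⟩ * (mon b l).prod fun i e => y i ^ e := by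
  simp only [blockPolynomial, map_sum, eval_monomial]

theorem continuous_eval_blockPolynomial (b : Fin k) (y : σ → ℝ) :
    Continuous fun x => eval y (blockPolynomial mon x b) := by
  simp only [eval_blockPolynomial]
  fun_prop

theorem eval_blockPolynomial_blockSign (g : Fin k → ℤˣ) (x : BlockIndex m → ℝ) (b : Fin k)
    (y : σ → ℝ) : eval y (blockPolynomial mon (blockSign g x) b) =
      g b • eval y (blockPolynomial mon x b) := by
  simp only [eval_blockPolynomial, blockSign, Finset.smul_sum, smul_mul_assoc]

theorem blockPolynomial_ne_zero (injective : ∀ b, Function.Injective (mon b))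
    {x : BlockIndex m → ℝ} (hx : x ∈ cubeBoundary m 1) (b : Fin k) :
    blockPolynomial mon x b ≠ 0 := by
  classical
  obtain ⟨l, hl⟩ := hx.2 b
  have coeff_eq : coeff (mon b l) (blockPolynomial mon x b) = x ⟨b, l⟩ := by
    simp [blockPolynomial, coeff_sum, coeff_monomial, (injective b).eq_iff]
  intro zero
  rw [zero, coeff_zero] at coeff_eq
  simp [← coeff_eq] at hl

theorem totalDegree_blockPolynomial_le {d : Fin k → ℕ} (degree_le : ∀ b l, (mon b l).degree ≤ d b)
    (x : BlockIndex m → ℝ) (b : Fin k) : (blockPolynomial mon x b).totalDegree ≤ d b :=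
  totalDegree_finsetSum_le fun l _ => (totalDegree_monomial_le _ _).trans (degree_le b l)

end BlockPolynomial

section Partition

open MvPolynomial

variable {k D : ℕ} {σ ι : Type*} [Fintype σ] [Fintype ι]

theorem exists_prod_signCell_meeting_le {d : Fin k → ℕ}
    (le_choose : ∀ b, blockDim k ι b + 1 ≤ (Fintype.card σ + d b).choose (Fintype.card σ))
    (sum_le : ∑ b, d b ≤ D) {Γ : ι → Finset (Set (σ → ℝ))} {B : ι → ℝ}
    (hB : ∀ i, ∀ q : MvPolynomial σ ℝ, q ≠ 0 → q.totalDegree ≤ D → ∀ γ ∈ Γ i,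
      (componentsMeeting {y | eval y q ≠ 0} γ).Finite ∧
        ((componentsMeeting {y | eval y q ≠ 0} γ).ncard : ℝ) ≤ B i) :
    ∃ p : Fin k → MvPolynomial σ ℝ, ∏ b, p b ≠ 0 ∧ (∏ b, p b).totalDegree ≤ D ∧ ∀ i τ,
      2 ^ k * ({γ ∈ (Γ i : Set (Set (σ → ℝ))) |
        (γ ∩ signCell (fun b y => eval y (p b)) τ).Nonempty}.ncard : ℝ) ≤ B i * (Γ i).card := by
  choose mon injective degree_le using fun b => exists_injective_degree_le (le_choose b)
  have prod_ne_zero (x) (hx : x ∈ cubeBoundary (blockDim k ι) 1) :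
      ∏ b, blockPolynomial mon x b ≠ 0 :=
    Finset.prod_ne_zero_iff.mpr fun b _ => blockPolynomial_ne_zero injective hx b
  have degree_prod_le (x) : (∏ b, blockPolynomial mon x b).totalDegree ≤ D :=
    (totalDegree_finsetProd _ _).trans <|
      (Finset.sum_le_sum fun b _ => totalDegree_blockPolynomial_le degree_le x b).trans sum_le
  obtain ⟨x, hx, ncard_le⟩ := exists_mem_cubeBoundary_ncard_mem_le (Γ := Γ) (B := B)
    (O := fun γ τ => {x | (γ ∩ signCell (fun b y => eval y (blockPolynomial mon x b)) τ).Nonempty})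
    (isOpen_setOf_inter_signCell_nonempty continuous_eval_blockPolynomial)
    (fun γ τ g x => by
      simp only [Set.mem_ofPred_eq, signCell, eval_blockPolynomial_blockSign, smul_smul,
        Pi.mul_apply, mul_comm (g _)])
    (fun x hx i γ hγ => by
      obtain ⟨finite, ncard_le⟩ := hB i _ (prod_ne_zero x hx) (degree_prod_le x) γ hγ
      simp only [map_prod, Finset.prod_ne_zero_iff, Finset.mem_univ, true_implies]
        at finite ncard_le
      refine le_trans (Nat.cast_le.mpr ?_) ncard_le
      exact ncard_signCell_meeting_le_ncard_componentsMeeting (fun b => continuous_eval _) finite)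
  exact ⟨_, prod_ne_zero x hx, degree_prod_le x, ncard_le⟩

theorem exists_partition_of_le_choose {d : Fin k → ℕ}
    (le_choose : ∀ b, blockDim k ι b + 1 ≤ (Fintype.card σ + d b).choose (Fintype.card σ))
    (sum_le : ∑ b, d b ≤ D) {Γ : ι → Finset (Set (σ → ℝ))} {B : ι → ℝ}
    (hB : ∀ i, ∀ q : MvPolynomial σ ℝ, q ≠ 0 → q.totalDegree ≤ D → ∀ γ ∈ Γ i,
      (componentsMeeting {y | eval y q ≠ 0} γ).Finite ∧
        ((componentsMeeting {y | eval y q ≠ 0} γ).ncard : ℝ) ≤ B i) :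
    ∃ p : MvPolynomial σ ℝ, p ≠ 0 ∧ p.totalDegree ≤ D ∧ ∀ i x, eval x p ≠ 0 →
      2 ^ k * ({γ ∈ (Γ i : Set (Set (σ → ℝ))) |
        (γ ∩ connectedComponentIn {y | eval y p ≠ 0} x).Nonempty}.ncard : ℝ) ≤
          B i * (Γ i).card := by
  obtain ⟨p, ne_zero, degree_le, ncard_le⟩ := exists_prod_signCell_meeting_le le_choose sum_le hB
  refine ⟨∏ b, p b, ne_zero, degree_le, fun i x hx => ?_⟩
  simp only [map_prod, Finset.prod_ne_zero_iff, Finset.mem_univ, true_implies] at hx ⊢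
  obtain ⟨τ, mem⟩ := exists_mem_signCell (f := fun b y => eval y (p b)) hx
  refine le_trans ?_ (ncard_le i τ)
  gcongr
  · exact (Γ i).finite_toSet.subset fun γ hγ => hγ.1
  · exact connectedComponentIn_subset_signCell (fun b => continuous_eval _) mem

end Partition

/-! ### The choice of the degrees -/

section Degrees

theorem lt_choose_of_factorial_mul_le_pow {n d N : ℕ} (hn : n ≠ 0) (h : n.factorial * N ≤ d ^ n) :
    N < (n + d).choose n := by
  refine Nat.lt_of_mul_lt_mul_left (a := n.factorial) ?_
  calc n.factorial * N ≤ d ^ n := h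
    _ < (d + 1) ^ n := Nat.pow_lt_pow_left d.lt_succ_self hn
    _ = (n + d + 1 - n) ^ n := by congr 1; omega
    _ ≤ (n + d).descFactorial n := Nat.pow_sub_le_descFactorial _ _
    _ = n.factorial * (n + d).choose n := Nat.descFactorial_eq_factorial_mul_choose _ _

theorem sum_ceil_mul_pow_le {r s D : ℝ} (hr : 1 < r) (hs : 1 ≤ s) {k : ℕ}
    (h : 2 * (s * r ^ k) ≤ D * (r - 1)) : ∑ b : Fin k, (⌈s * r ^ (b : ℕ)⌉₊ : ℝ) ≤ D := by
  have ceil_le (b : ℕ) : (⌈s * r ^ b⌉₊ : ℝ) ≤ 2 * s * r ^ b := by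
    have one_le : 1 ≤ s * r ^ b := one_le_mul_of_one_le_of_one_le hs (one_le_pow₀ hr.le)
    linarith [Nat.ceil_lt_add_one (zero_le_one.trans one_le)]
  calc ∑ b : Fin k, (⌈s * r ^ (b : ℕ)⌉₊ : ℝ) ≤ ∑ b : Fin k, 2 * s * r ^ (b : ℕ) :=
        Finset.sum_le_sum fun b _ => ceil_le b
    _ = 2 * s * (r ^ k - 1) / (r - 1) := by
        rw [← Finset.mul_sum, Fin.sum_univ_eq_sum_range (r ^ ·), geom_sum_eq hr.ne', mul_div_assoc]
    _ ≤ D := by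
        rw [div_le_iff₀ (sub_pos.mpr hr)]
        linarith

theorem exists_two_pow_mul_near (x : ℝ) {a : ℝ} (ha : 0 < a) :
    ∃ k : ℕ, x < 2 ^ (k + 1) * a ∧ (k = 0 ∨ 2 ^ k * a ≤ x) := by
  rcases lt_or_ge (x / a) 1 with small | large
  · exact ⟨0, by rw [zero_add, pow_one]; linarith [(div_lt_one ha).mp small], Or.inl rfl⟩
  · obtain ⟨k, le, lt⟩ := exists_nat_pow_near large one_lt_two
    exact ⟨k, (div_lt_iff₀ ha).mp lt, Or.inr ((le_div_iff₀ ha).mp le)⟩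

variable {n j : ℕ}

-- The degree `d b` is `(n! * j * 2 ^ b) ^ (1 / n)` rounded up, and `k` is as large as the bound on
-- the geometric sum of these degrees allows.
theorem exists_degrees (D : ℕ) (hn : n ≠ 0) (hj : j ≠ 0) :
    ∃ (k : ℕ) (d : Fin k → ℕ), (∀ b : Fin k, j * 2 ^ (b : ℕ) < (n + d b).choose n) ∧ ∑ b, d b ≤ D ∧
      (D * ((2 : ℝ) ^ (1 / (n : ℝ)) - 1)) ^ n < 2 ^ (k + 1) * (2 ^ n * (n.factorial * j)) := by
  have one_le : (1 : ℝ) ≤ n.factorial * j := by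
    exact_mod_cast Nat.mul_pos n.factorial_pos (Nat.pos_of_ne_zero hj)
  set r : ℝ := (2 : ℝ) ^ (1 / (n : ℝ))
  set s : ℝ := (n.factorial * j : ℝ) ^ (1 / (n : ℝ))
  have one_lt_r : 1 < r := Real.one_lt_rpow one_lt_two (by positivity)
  have one_le_s : 1 ≤ s := Real.one_le_rpow one_le (by positivity)
  have scale_pow (b : ℕ) : (s * r ^ b) ^ n = n.factorial * j * 2 ^ b := by
    rw [mul_pow, pow_right_comm, ← Real.rpow_natCast s, ← Real.rpow_natCast r,
      ← Real.rpow_mul (by positivity), ← Real.rpow_mul zero_le_two,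
      one_div_mul_cancel (Nat.cast_ne_zero.mpr hn), Real.rpow_one, Real.rpow_one]
  obtain ⟨k, lt, near⟩ := exists_two_pow_mul_near ((D * (r - 1)) ^ n)
    (a := 2 ^ n * (n.factorial * j)) (by positivity)
  refine ⟨k, fun b => ⌈s * r ^ (b : ℕ)⌉₊, fun b => ?_, ?_, lt⟩
  · refine lt_choose_of_factorial_mul_le_pow hn ?_
    have : (s * r ^ (b : ℕ)) ^ n ≤ (⌈s * r ^ (b : ℕ)⌉₊ : ℝ) ^ n := by
      gcongr
      exact Nat.le_ceil _
    rw [scale_pow, mul_assoc] at this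
    exact_mod_cast this
  · rcases near with rfl | le
    · simp
    · have le_base : 2 * (s * r ^ k) ≤ D * (r - 1) := by
        refine le_of_pow_le_pow_left₀ hn (by nlinarith) ?_
        rw [mul_pow, scale_pow]
        linarith
      exact_mod_cast sum_ceil_mul_pow_le one_lt_r one_le_s le_base

theorem inv_two_pow_le_of_lt {D r : ℝ} {k : ℕ} (hD : 0 < D) (hr : 1 < r)
    (h : (D * (r - 1)) ^ n < 2 ^ (k + 1) * (2 ^ n * (n.factorial * j))) :
    ((2 : ℝ) ^ k)⁻¹ ≤ 2 ^ (n + 1) * n.factorial / (r - 1) ^ n * j * (D ^ n)⁻¹ := by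
  have r_sub_one_pos : 0 < r - 1 := sub_pos.mpr hr
  calc ((2 : ℝ) ^ k)⁻¹ ≤ 2 ^ (n + 1) * n.factorial * j / (D * (r - 1)) ^ n := by
        rw [inv_eq_one_div, div_le_div_iff₀ (by positivity) (by positivity), one_mul]
        exact h.le.trans_eq (by ring)
    _ = 2 ^ (n + 1) * n.factorial / (r - 1) ^ n * j * (D ^ n)⁻¹ := by
        rw [mul_pow]
        field_simp

end Degrees

end PolynomialPartitioning

open PolynomialPartitioning in
theorem polynomial_partitioning_several_families_general {σ ι : Type*} [Fintype σ] [Nonempty σ]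
    [Fintype ι] {D : ℕ} (hD : 1 ≤ D) (Γ : ι → Finset (Set (σ → ℝ))) (B : ι → ℝ)
    (hB : ∀ i, ∀ q : MvPolynomial σ ℝ, q ≠ 0 → q.totalDegree ≤ D → ∀ γ ∈ Γ i,
      (componentsMeeting {y | MvPolynomial.eval y q ≠ 0} γ).Finite ∧
        ((componentsMeeting {y | MvPolynomial.eval y q ≠ 0} γ).ncard : ℝ) ≤ B i) :
    ∃ p : MvPolynomial σ ℝ, p ≠ 0 ∧ p.totalDegree ≤ D ∧
      ∀ (i : ι) (x : σ → ℝ), MvPolynomial.eval x p ≠ 0 →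
        ({γ ∈ (Γ i : Set (Set (σ → ℝ))) |
            (γ ∩ connectedComponentIn {y | MvPolynomial.eval y p ≠ 0} x).Nonempty}.ncard : ℝ) ≤
          (2 ^ (Fintype.card σ + 1) * ((Fintype.card σ).factorial : ℝ) /
              ((2 : ℝ) ^ ((1 : ℝ) / Fintype.card σ) - 1) ^ Fintype.card σ) *
            Fintype.card ι * B i * ((D : ℝ) ^ Fintype.card σ)⁻¹ * (Γ i).card := by
  rcases isEmpty_or_nonempty ι with _ | _
  · exact ⟨1, one_ne_zero, by simp, isEmptyElim⟩
  obtain ⟨k, d, lt_choose, sum_le, D_lt⟩ :=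
    exists_degrees D (Fintype.card_ne_zero (α := σ)) (Fintype.card_ne_zero (α := ι))
  obtain ⟨p, p_ne_zero, degree_le, partition⟩ := exists_partition_of_le_choose lt_choose sum_le hB
  refine ⟨p, p_ne_zero, degree_le, fun i x hx => ?_⟩
  have total_nonneg : 0 ≤ B i * (Γ i).card := le_trans (by positivity) (partition i x hx)
  have one_lt_root : 1 < (2 : ℝ) ^ ((1 : ℝ) / Fintype.card σ) :=
    Real.one_lt_rpow one_lt_two (by positivity)
  calc _ ≤ ((2 : ℝ) ^ k)⁻¹ * (B i * (Γ i).card) :=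
        (le_inv_mul_iff₀ (by positivity)).mpr (partition i x hx)
    _ ≤ _ := mul_le_mul_of_nonneg_right
        (inv_two_pow_le_of_lt (by exact_mod_cast hD) one_lt_root D_lt) total_nonneg
    _ = _ := by ring

/-- **The main ("colored") polynomial partitioning theorem** for several families of
varieties, with the Solymosi–Tao crossing bound replaced by the explicit hypotheses `B i`,
and with the explicit constant `C_n = 2^(n+1)·n! / (2^(1/n) − 1)^n`. -/
theorem polynomial_partitioning_several_families (n j D : ℕ) (hn : 1 ≤ n) (hj : 1 ≤ j)
    (hD : 1 ≤ D) (Γ : Fin j → Finset (Set (Fin n → ℝ)))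
    (halg : ∀ i, ∀ γ ∈ Γ i, ∃ (m : ℕ) (q : Fin m → MvPolynomial (Fin n) ℝ),
      γ = {x : Fin n → ℝ | ∀ k, MvPolynomial.eval x (q k) = 0})
    (B : Fin j → ℝ) (hB1 : ∀ i, 1 ≤ B i)
    (hB : ∀ i, ∀ q : MvPolynomial (Fin n) ℝ, q ≠ 0 → q.totalDegree ≤ D → ∀ γ ∈ Γ i,
      {S : Set (Fin n → ℝ) | ∃ x ∈ γ, MvPolynomial.eval x q ≠ 0 ∧
          S = connectedComponentIn {y : Fin n → ℝ | MvPolynomial.eval y q ≠ 0} x}.Finite ∧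
        ({S : Set (Fin n → ℝ) | ∃ x ∈ γ, MvPolynomial.eval x q ≠ 0 ∧
          S = connectedComponentIn {y : Fin n → ℝ | MvPolynomial.eval y q ≠ 0} x}.ncard : ℝ) ≤ B i) :
    ∃ p : MvPolynomial (Fin n) ℝ, p ≠ 0 ∧ p.totalDegree ≤ D ∧
      ∀ (i : Fin j) (x : Fin n → ℝ), MvPolynomial.eval x p ≠ 0 →
        ({γ ∈ (Γ i : Set (Set (Fin n → ℝ))) |
            (γ ∩ connectedComponentIn {y : Fin n → ℝ | MvPolynomial.eval y p ≠ 0} x).Nonempty}.ncard : ℝ) ≤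
          (2 ^ (n + 1) * (Nat.factorial n : ℝ) / ((2 : ℝ) ^ ((1 : ℝ) / n) - 1) ^ n) *
            j * B i * ((D : ℝ) ^ n)⁻¹ * (Γ i).card := by
  have : Nonempty (Fin n) := Fin.pos_iff_nonempty.mp hn
  simpa only [Fintype.card_fin] using polynomial_partitioning_several_families_general hD Γ B hB
end

section
/- Let s ≥ 1 be an integer. In the polynomial ring 𝔽₂[u₁,…,u_s] over the field with two elements, the product over all non-zero tuples α = (α₁,…,α_s) ∈ (ℤ/2)^s \ {0} of the linear forms α₁u₁ + ⋯ + α_s u_s equals the sum over all permutations π of {1,…,s} of the monomials u_{π(1)}^(2^(s−1)) · u_{π(2)}^(2^(s−2)) ⋯ u_{π(s)}^(2^0). That is, ∏_{α ∈ (ℤ/2)^s \ {0}} (α₁u₁ + ⋯ + α_s u_s) = ∑_{π ∈ Sym_s} u_{π(1)}^(2^(s−1)) u_{π(2)}^(2^(s−2)) ⋯ u_{π(s)}^(2^0). -/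
/-!
Let `K` be a finite field with `q` elements and `v` a vector with entries in a commutative
`K`-algebra. The map `ψ(x) = ∏ a : K, (x + a v₀) = x ^ q - v₀ ^ (q - 1) x` is `K`-linear and kills
`v₀`. Grouping the nonzero linear forms by their coefficients other than the first one turns their
product `D(v₀, …, vₙ)` into `-v₀ ^ (q - 1) D(ψ(v₁), …, ψ(vₙ))`. In the Moore matrix `(vᵢ ^ q ^ j)`,
subtracting from every column a multiple of the preceding one replaces column `j + 1` by
`(ψ(vᵢ) ^ q ^ j)`, so its determinant satisfies `M(v₀, …, vₙ) = v₀ M(ψ(v₁), …, ψ(vₙ))`. Hence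
`D = (-1) ^ s M ^ (q - 1)` for `s` entries. For `q = 2` signs do not matter, and `D` is the
permanent of the Moore matrix.
-/

open Finset

section FiniteField

variable (K : Type*) [Field K] [Fintype K]

lemma prod_X_sub_C_eq_X_pow_card_sub_X :
    ∏ a : K, (Polynomial.X - Polynomial.C a) = Polynomial.X ^ Fintype.card K - Polynomial.X := by
  have monic : (Polynomial.X ^ Fintype.card K - Polynomial.X : Polynomial K).Monic :=
    Polynomial.monic_X_pow_sub (by simpa using Fintype.one_lt_card)
  have natDegree_eq := FiniteField.X_pow_card_sub_X_natDegree_eq K (Fintype.one_lt_card (α := K))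
  simpa [FiniteField.roots_X_pow_card_sub_X] using
    Polynomial.prod_multiset_X_sub_C_of_monic_of_roots_card_eq monic
      (by simp [FiniteField.roots_X_pow_card_sub_X, natDegree_eq])

lemma prod_ne_zero_eq_neg_one [DecidableEq K] : ∏ a : K with a ≠ 0, a = -1 := by
  have prod_units := congrArg Units.val (FiniteField.prod_univ_units_id_eq_neg_one (K := K))
  rw [Units.coe_prod, Units.val_neg, Units.val_one] at prod_units
  rw [← prod_units, ← prod_subtype_eq_prod_filter, subtype_univ]
  exact (Fintype.prod_equiv unitsEquivNeZero _ _ fun _ ↦ rfl).symm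

variable {R : Type*} [CommRing R] [Algebra K R]

/-- The `K`-linear map `x ↦ x ^ q - y ^ (q - 1) * x`, where `q` is the cardinality of `K`. It is the
linearized polynomial with roots the points of the line `K • y`, see
`prod_add_smul_eq_linePolynomial`; the Frobenius-based definition makes linearity automatic. -/
noncomputable def linePolynomial (y : R) : R →ₗ[K] R :=
  (FiniteField.frobeniusAlgHom K R).toLinearMap - LinearMap.mulLeft K (y ^ (Fintype.card K - 1))

lemma linePolynomial_apply (x y : R) :
    linePolynomial K y x = x ^ Fintype.card K - y ^ (Fintype.card K - 1) * x := rfl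

@[simp]
lemma linePolynomial_self (y : R) : linePolynomial K y y = 0 := by
  rw [linePolynomial_apply, pow_sub_one_mul Fintype.card_ne_zero, sub_self]

lemma linePolynomial_pow_card_pow (x y : R) (n : ℕ) :
    linePolynomial K y x ^ Fintype.card K ^ n =
      x ^ Fintype.card K ^ (n + 1) -
        (y ^ (Fintype.card K - 1)) ^ Fintype.card K ^ n * x ^ Fintype.card K ^ n := by
  have frobenius_pow (z : R) :
      (FiniteField.frobeniusAlgHom K R ^ n) z = z ^ Fintype.card K ^ n := by
    rw [AlgHom.coe_pow, FiniteField.coe_frobeniusAlgHom, pow_iterate]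
  rw [← frobenius_pow, linePolynomial_apply, map_sub, map_mul]
  simp only [frobenius_pow]
  rw [pow_succ', pow_mul]

lemma prod_add_smul_eq_linePolynomial (x y : R) : ∏ a : K, (x + a • y) = linePolynomial K y x := by
  have homogenized : ∏ a : K, (MvPolynomial.X 0 - MvPolynomial.C a * MvPolynomial.X 1) =
      (MvPolynomial.X 0 ^ Fintype.card K -
        MvPolynomial.X 0 * MvPolynomial.X 1 ^ (Fintype.card K - 1) :
          MvPolynomial (Fin 2) K) := by
    have prod_homogenize := Polynomial.homogenize_finsetProd (s := univ) (n := fun _ ↦ 1)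
      fun (a : K) _ ↦ Polynomial.natDegree_X_sub_C_le a
    simpa [prod_X_sub_C_eq_X_pow_card_sub_X, Fintype.card_ne_zero] using prod_homogenize.symm
  have evaluated := congrArg (MvPolynomial.aeval ![x, y]) homogenized
  rw [← Equiv.prod_comp (Equiv.neg K), linePolynomial_apply]
  simpa [Algebra.smul_def, ← sub_eq_add_neg, mul_comm x] using evaluated

lemma prod_ne_zero_smul [DecidableEq K] (y : R) :
    ∏ a : K with a ≠ 0, a • y = -y ^ (Fintype.card K - 1) := by
  simp only [Finset.prod_smul, prod_const]
  rw [prod_ne_zero_eq_neg_one, neg_one_smul, filter_ne', card_erase_of_mem (mem_univ 0),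
    card_univ]

end FiniteField

section Moore

variable {R : Type*} {n : ℕ}

/-- The Moore matrix, with rows `(vᵢ, vᵢ ^ q, vᵢ ^ q ^ 2, …)`: the analogue of the Vandermonde
matrix for `q`-linearized polynomials. -/
def mooreMatrix [Monoid R] (q : ℕ) (v : Fin n → R) : Matrix (Fin n) (Fin n) R :=
  Matrix.of fun i j ↦ v i ^ q ^ (j : ℕ)

@[simp]
lemma mooreMatrix_apply [Monoid R] (q : ℕ) (v : Fin n → R) (i j : Fin n) :
    mooreMatrix q v i j = v i ^ q ^ (j : ℕ) := rfl

lemma det_mooreMatrix_succ [CommRing R] (K : Type*) [Field K] [Fintype K] [Algebra K R]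
    (v : Fin (n + 1) → R) :
    (mooreMatrix (Fintype.card K) v).det =
      v 0 * (mooreMatrix (Fintype.card K) fun i ↦ linePolynomial K (v 0) (v i.succ)).det := by
  let B : Matrix (Fin (n + 1)) (Fin (n + 1)) R := Matrix.of fun i ↦
    Fin.cons (v i) fun j ↦ linePolynomial K (v 0) (v i) ^ Fintype.card K ^ (j : ℕ)
  have det_eq : (mooreMatrix (Fintype.card K) v).det = B.det :=
    Matrix.det_eq_of_forall_col_eq_smul_add_pred
      (fun j ↦ (v 0 ^ (Fintype.card K - 1)) ^ Fintype.card K ^ (j : ℕ))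
      (fun i ↦ by simp [B]) (fun i j ↦ by simp [B, linePolynomial_pow_card_pow])
  have row_zero (j : Fin n) : B 0 j.succ = 0 := by simp [B]
  rw [det_eq, Matrix.det_succ_row_zero, Fin.sum_univ_succ]
  simp only [row_zero, mul_zero, zero_mul, sum_const_zero, add_zero, Fin.succAbove_zero,
    Fin.val_zero, pow_zero, one_mul]
  rfl

lemma permanent_mooreMatrix [CommSemiring R] (q : ℕ) (v : Fin n → R) :
    (mooreMatrix q v).permanent =
      ∑ π : Equiv.Perm (Fin n), ∏ i, v (π i) ^ q ^ (n - 1 - (i : ℕ)) := by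
  rw [← Matrix.permanent_permute_rows Fin.revPerm]
  simp [Matrix.permanent, Fin.val_rev, Nat.sub_sub, add_comm 1]

end Moore

section TopDickson

lemma prod_ne_zero_fin_succ {K M : Type*} [Zero K] [Fintype K] [DecidableEq K] [CommMonoid M]
    {n : ℕ} (f : (Fin (n + 1) → K) → M) :
    ∏ α with α ≠ 0, f α =
      (∏ a with a ≠ 0, f (Matrix.vecCons a 0)) *
        ∏ α with α ≠ 0, ∏ a, f (Matrix.vecCons a α) := by
  have prod_vecCons (g : (Fin (n + 1) → K) → M) : ∏ α, g α = ∏ α, ∏ a, g (Matrix.vecCons a α) := by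
    rw [← (Fin.consEquiv fun _ ↦ K).prod_comp, Fintype.prod_prod_type_right]
    rfl
  rw [prod_filter, prod_vecCons, ← mul_prod_erase univ _ (mem_univ 0),
    filter_ne' univ (0 : Fin n → K)]
  congr 1
  · simp [prod_filter]
  · refine prod_congr rfl fun α hα ↦ prod_congr rfl fun a _ ↦ ?_
    simp [ne_of_mem_erase hα]

variable (K : Type*) [Field K] [Fintype K] [DecidableEq K]
variable {R : Type*} [CommRing R] [Algebra K R]

/-- The product of all nonzero `K`-linear forms, evaluated at `v`. For `v` the vector of variables
of a polynomial ring this is the Dickson polynomial of maximal degree. -/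
def topDickson {n : ℕ} (v : Fin n → R) : R :=
  ∏ α : Fin n → K with α ≠ 0, ∑ i, α i • v i

lemma topDickson_succ {n : ℕ} (v : Fin (n + 1) → R) :
    topDickson K v =
      -v 0 ^ (Fintype.card K - 1) *
        topDickson K fun i ↦ linePolynomial K (v 0) (v i.succ) := by
  have prod_line (α : Fin n → K) :
      ∏ a : K, (a • v 0 + ∑ i, α i • v i.succ) =
        ∑ i, α i • linePolynomial K (v 0) (v i.succ) := by
    simp only [add_comm (_ • v 0), prod_add_smul_eq_linePolynomial, map_sum, map_smul]
  simp only [topDickson, prod_ne_zero_fin_succ, Fin.sum_univ_succ, Matrix.cons_val_zero,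
    Matrix.cons_val_succ, prod_line, Pi.zero_apply, zero_smul, sum_const_zero, add_zero,
    prod_ne_zero_smul]

theorem topDickson_eq_neg_one_pow_mul_det_mooreMatrix_pow {n : ℕ} (v : Fin n → R) :
    topDickson K v = (-1) ^ n * (mooreMatrix (Fintype.card K) v).det ^ (Fintype.card K - 1) := by
  induction n with
  | zero => simp [topDickson, Subsingleton.elim _ ![]]
  | succ n ih =>
    rw [topDickson_succ, ih, det_mooreMatrix_succ K v]
    ring

end TopDickson

lemma det_eq_permanent_of_neg_one_eq_one {n R : Type*} [DecidableEq n] [Fintype n] [CommRing R]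
    (h : (-1 : R) = 1) (M : Matrix n n R) : M.det = M.permanent := by
  rw [Matrix.det_apply', Matrix.permanent]
  refine sum_congr rfl fun σ _ ↦ ?_
  rcases Int.units_eq_one_or (Equiv.Perm.sign σ) with hσ | hσ <;> simp [hσ, h]

theorem top_dickson_eq_sum_over_permutations_general {R : Type*} [CommRing R] [Algebra (ZMod 2) R]
    {s : ℕ} (v : Fin s → R) :
    ∏ α : Fin s → ZMod 2 with α ≠ 0, ∑ i, α i • v i =
      ∑ π : Equiv.Perm (Fin s), ∏ i, v (π i) ^ 2 ^ (s - 1 - (i : ℕ)) := by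
  have neg_one_eq_one : (-1 : R) = 1 := by
    rw [← map_one (algebraMap (ZMod 2) R), ← map_neg, ZMod.neg_eq_self_mod_two]
  calc ∏ α : Fin s → ZMod 2 with α ≠ 0, ∑ i, α i • v i
      = (mooreMatrix 2 v).det := by
        simpa [topDickson, neg_one_eq_one, ZMod.card] using
          topDickson_eq_neg_one_pow_mul_det_mooreMatrix_pow (ZMod 2) v
    _ = (mooreMatrix 2 v).permanent := det_eq_permanent_of_neg_one_eq_one neg_one_eq_one _
    _ = ∑ π : Equiv.Perm (Fin s), ∏ i, v (π i) ^ 2 ^ (s - 1 - (i : ℕ)) :=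
        permanent_mooreMatrix 2 v

/-- **The top Dickson polynomial as a sum over permutations**: in `𝔽₂[u₁,…,u_s]`, the product
of all non-zero linear forms `α₁u₁ + ⋯ + α_s u_s`, `α ∈ (ℤ/2)ˢ \ {0}`, equals
`∑_{π ∈ Sym_s} u_{π(1)}^{2^{s−1}} u_{π(2)}^{2^{s−2}} ⋯ u_{π(s)}^{2^0}`. -/
theorem top_dickson_eq_sum_over_permutations (s : ℕ) (hs : 1 ≤ s) :
    (∏ α ∈ Finset.univ.filter (fun α : Fin s → ZMod 2 => α ≠ 0),
        ∑ i, MvPolynomial.C (α i) * MvPolynomial.X i) =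
      ∑ π : Equiv.Perm (Fin s),
        ∏ i : Fin s,
          (MvPolynomial.X (π i) : MvPolynomial (Fin s) (ZMod 2)) ^ 2 ^ (s - 1 - (i : ℕ)) := by
  simpa only [MvPolynomial.smul_eq_C_mul] using
    top_dickson_eq_sum_over_permutations_general (MvPolynomial.X (R := ZMod 2) (σ := Fin s))
end
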